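/- Let G be the group presented by the generating set S and relation set R of Theorem 2.14 (the presentation of the virtual Thompson group VF) as described in the context. Then G is totally orderable (bi-orderable): there exists a linear order ≤ on G such that for all a, b, c ∈ G, a ≤ b implies both c·a ≤ c·b and a·c ≤ b·c. -/

import Mathlib

/-- The alphabet Σ = {x, v}. -/
inductive Letter : Type
  | x | v
deriving DecidableEq

/-- Words on Σ (possibly empty). -/
abbrev Word := List Letter

/-- A target word t ∈ {xx, xv, vx, vv}, encoded as the pair of its two letters. -/
abbrev Tgt := Letter × Letter

/-- The word (of length two) corresponding to a target. -/
def tw (t : Tgt) : Word := [t.1, t.2]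

/-- Index for the three generators of family (i): X_{v→vv}, X_{v→vx}, X_{v→xv}. -/
inductive G1 : Type
  | vv   -- X_{v→vv}
  | vx   -- X_{v→vx}
  | xv   -- X_{v→xv}
deriving DecidableEq

/-- Index for the four kinds of generators of family (iii):
X_{x→vv,u}, X_{x→vx,u}, X_{v→xx,u}, X_{v→xv,u}. -/
inductive G3 : Type
  | xvv  -- X_{x→vv,u}
  | xvx  -- X_{x→vx,u}
  | vxx  -- X_{v→xx,u}
  | vxv  -- X_{v→xv,u}
deriving DecidableEq

/-- The generating set S of the presentation of the virtual Thompson group VF. -/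
inductive Gen : Type
  /-- family (i): X_{v→vv}, X_{v→vx}, X_{v→xv} -/
  | fam1 : G1 → Gen
  /-- family (ii): X_{a, s→t, u} with a ∈ {x,v}, s ∈ {x,v}, t ∈ {xx,xv,vx,vv}, u any word -/
  | fam2 : Letter → Letter → Tgt → Word → Gen
  /-- family (iii): X_{c, u} with c one of x→vv, x→vx, v→xx, v→xv and u a nonempty word -/
  | fam3 : G3 → {u : Word // u ≠ []} → Gen

/-- The corresponding generator of the free group on S. -/
def X (g : Gen) : FreeGroup Gen := FreeGroup.of g

open Letter in
/-- The relators of the presentation of VF (each relation A·B = C·D becomes the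
relator A·B·(C·D)⁻¹). -/
inductive VFRel : FreeGroup Gen → Prop
  /-- (R1) and (R2): for a ∈ {x, v},
  X_{a,s₁→t₁, p s₂ q} X_{a,s₂→t₂, q} = X_{a,s₂→t₂, q} X_{a,s₁→t₁, p t₂ q}. -/
  | r12 (a s₁ s₂ : Letter) (t₁ t₂ : Tgt) (p q : Word) :
      VFRel (X (.fam2 a s₁ t₁ (p ++ [s₂] ++ q)) * X (.fam2 a s₂ t₂ q) *
        (X (.fam2 a s₂ t₂ q) * X (.fam2 a s₁ t₁ (p ++ tw t₂ ++ q)))⁻¹)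
  /-- (R3): X_{x,s→t,q} X_{x→vv, p t q} = X_{x→vv, p s q} X_{v,s→t,q}. -/
  | r3 (s : Letter) (t : Tgt) (p q : Word) :
      VFRel (X (.fam2 x s t q) * X (.fam3 .xvv ⟨p ++ tw t ++ q, by simp [tw]⟩) *
        (X (.fam3 .xvv ⟨p ++ [s] ++ q, by simp⟩) * X (.fam2 v s t q))⁻¹)
  /-- (R4): X_{x,s→t,q} X_{x→vx, p t q} = X_{x→vx, p s q} X_{v,s→t,q}. -/
  | r4 (s : Letter) (t : Tgt) (p q : Word) :
      VFRel (X (.fam2 x s t q) * X (.fam3 .xvx ⟨p ++ tw t ++ q, by simp [tw]⟩) *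
        (X (.fam3 .xvx ⟨p ++ [s] ++ q, by simp⟩) * X (.fam2 v s t q))⁻¹)
  /-- (R5): X_{v,s→t,q} X_{v→xx, p t q} = X_{v→xx, p s q} X_{x,s→t,q}. -/
  | r5 (s : Letter) (t : Tgt) (p q : Word) :
      VFRel (X (.fam2 v s t q) * X (.fam3 .vxx ⟨p ++ tw t ++ q, by simp [tw]⟩) *
        (X (.fam3 .vxx ⟨p ++ [s] ++ q, by simp⟩) * X (.fam2 x s t q))⁻¹)
  /-- (R6): X_{v,s→t,q} X_{v→xv, p t q} = X_{v→xv, p s q} X_{x,s→t,q}. -/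
  | r6 (s : Letter) (t : Tgt) (p q : Word) :
      VFRel (X (.fam2 v s t q) * X (.fam3 .vxv ⟨p ++ tw t ++ q, by simp [tw]⟩) *
        (X (.fam3 .vxv ⟨p ++ [s] ++ q, by simp⟩) * X (.fam2 x s t q))⁻¹)

/-- The set of relators. -/
def VFrels : Set (FreeGroup Gen) := {g | VFRel g}

/-- The virtual Thompson group VF, as the presented group ⟨S | R⟩. -/
abbrev VF := PresentedGroup VFrels

/-!
The group `VF` embeds into a simpler group `Ambient`, whose generators are indexed by numbers
instead of words. An HNN extension of `VF` contains elements conjugating the `X_{x,s→t,u}` to the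
`X_{v,s→t,u}`, so that all relations say that a family `A u` indexed by words is transported by the
elements `E s t q = X_{x,s→t,q}` when a letter `s` in front of `q` is rewritten to `t`. The
quotients of `E x xx q` and `E s xx q` therefore conjugate `A u` to the element with index `x ⋯ x`
of the same length, and only the length of `u` matters.

`Ambient` is a Thompson group with additional labelled generators, and it is a subgroup of the
semidirect product of a right-angled Artin group and Thompson's group `F`. Here the conjugates of a
labelled generator by elements of `F` are the generators of the Artin group, and two of them commute
if the intervals in which they are supported are disjoint. The group `F` is bi-ordered by the first
place where a homeomorphism moves points up or down. The Artin group is bi-ordered by the leading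
coefficient of the Magnus expansion `a ↦ 1 + a`, and this order is invariant under `F` because `F`
preserves an order on the generators.
-/

namespace VirtualThompson

/-! ### Bi-orders and positive cones -/

/-- The set of positive elements of a bi-order: the group is the disjoint union of `P`, `P⁻¹`
and `{1}`, and `P` is closed under products and conjugation. -/
structure IsBiCone {G : Type*} [Group G] (P : Set G) : Prop where
  one_notMem : 1 ∉ P
  mul_mem : ∀ a ∈ P, ∀ b ∈ P, a * b ∈ P
  conj_mem : ∀ g, ∀ a ∈ P, g * a * g⁻¹ ∈ P
  trichotomy : ∀ a, a = 1 ∨ a ∈ P ∨ a⁻¹ ∈ P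

namespace IsBiCone

variable {G H : Type*} [Group G] [Group H]

theorem exists_linearOrder {P : Set G} (hP : IsBiCone P) :
    ∃ r : LinearOrder G, ∀ a b c : G, r.le a b → r.le (c * a) (c * b) ∧ r.le (a * c) (b * c) := by
  refine ⟨{ le a b := a = b ∨ a⁻¹ * b ∈ P
            le_refl _ := .inl rfl
            le_trans a b c := ?_
            le_antisymm a b := ?_
            le_total a b := ?_
            toDecidableLE := Classical.decRel _ }, fun a b c => ?_⟩
  · rintro (rfl | hab) (rfl | hbc)
    · exact .inl rfl
    · exact .inr hbc
    · exact .inr hab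
    · exact .inr (by simpa [mul_assoc] using hP.mul_mem _ hab _ hbc)
  · rintro (rfl | hab) (h | hba)
    · rfl
    · rfl
    · exact h.symm
    · exact absurd (by simpa [mul_assoc] using hP.mul_mem _ hab _ hba) hP.one_notMem
  · rcases hP.trichotomy (a⁻¹ * b) with h | h | h
    · exact .inl (.inl (inv_mul_eq_one.1 h))
    · exact .inl (.inr h)
    · exact .inr (.inr (by simpa using h))
  · rintro (rfl | hab)
    · exact ⟨.inl rfl, .inl rfl⟩
    · exact ⟨.inr (by simpa [mul_assoc] using hab),
        .inr (by simpa [mul_assoc] using hP.conj_mem c⁻¹ _ hab)⟩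

theorem preimage {P : Set H} (hP : IsBiCone P) {f : G →* H} (hf : Function.Injective f) :
    IsBiCone (f ⁻¹' P) where
  one_notMem := by simpa using hP.one_notMem
  mul_mem a ha b hb := by simpa using hP.mul_mem _ ha _ hb
  conj_mem g a ha := by simpa using hP.conj_mem (f g) _ ha
  trichotomy a := by
    simpa [map_eq_one_iff f hf] using hP.trichotomy (f a)

theorem semidirectProduct {φ : H →* MulAut G} {P : Set G} {Q : Set H} (hP : IsBiCone P)
    (hQ : IsBiCone Q) (hφ : ∀ h, ∀ g ∈ P, φ h g ∈ P) :
    IsBiCone {t : G ⋊[φ] H | t.right ∈ Q ∨ t.right = 1 ∧ t.left ∈ P} where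
  one_notMem := by simp [hP.one_notMem, hQ.one_notMem]
  mul_mem := by
    rintro a (ha | ⟨ha, ha'⟩) b (hb | ⟨hb, hb'⟩)
    · exact .inl (hQ.mul_mem _ ha _ hb)
    · exact .inl (by simpa [hb] using ha)
    · exact .inl (by simpa [ha] using hb)
    · exact .inr ⟨by simp [ha, hb], by simpa [ha] using hP.mul_mem _ ha' _ hb'⟩
  conj_mem := by
    rintro g a (ha | ⟨ha, ha'⟩)
    · exact .inl (hQ.conj_mem _ _ ha)
    · refine .inr ⟨by simp [ha], ?_⟩
      have hinv : φ g.right (φ (g.right)⁻¹ g.left⁻¹) = g.left⁻¹ := by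
        rw [map_inv φ, MulAut.apply_inv_self]
      simpa [ha, mul_assoc, -map_inv, hinv] using hP.conj_mem g.left _ (hφ g.right _ ha')
  trichotomy a := by
    rcases hQ.trichotomy a.right with h | h | h
    · rcases hP.trichotomy a.left with h' | h' | h'
      · exact .inl (SemidirectProduct.ext h' h)
      · exact .inr (.inl (.inr ⟨h, h'⟩))
      · exact .inr (.inr (.inr ⟨by simp [h], by simpa [h] using h'⟩))
    · exact .inr (.inl (.inl h))
    · exact .inr (.inr (.inl h))

end IsBiCone

/-! ### Power series with constant coefficient one -/

open PowerSeries (C coeff constantCoeff coeff_mul coeff_one coeff_C_mul coeff_succ_X_mul)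
open scoped PowerSeries

section CoeffMul

variable {A : Type*} [Semiring A] {u w : A⟦X⟧} {n k : ℕ}

theorem coeff_mul_of_constantCoeff_eq_one (hw : ∀ i < n, coeff i w = 0)
    (hu : constantCoeff u = 1) (hk : k ≤ n) : coeff k (w * u) = coeff k w := by
  rw [coeff_mul, Finset.sum_eq_single (k, 0) _ (by simp)]
  · simp [hu]
  · rintro ⟨i, j⟩ hij hne
    have hsum : i + j = k := Finset.HasAntidiagonal.mem_antidiagonal.1 hij
    have hj : j ≠ 0 := by rintro rfl; exact hne (by simpa using hsum)
    simp [hw i (by omega)]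

theorem coeff_mul_of_constantCoeff_eq_one' (hw : ∀ i < n, coeff i w = 0)
    (hu : constantCoeff u = 1) (hk : k ≤ n) : coeff k (u * w) = coeff k w := by
  rw [coeff_mul, Finset.sum_eq_single (0, k) _ (by simp)]
  · simp [hu]
  · rintro ⟨i, j⟩ hij hne
    have hsum : i + j = k := Finset.HasAntidiagonal.mem_antidiagonal.1 hij
    have hi : i ≠ 0 := by rintro rfl; exact hne (by simpa using hsum)
    simp [hw j (by omega)]

end CoeffMul

section LeadPos

variable {A : Type*} [Ring A] [LinearOrder A] {u v w : A⟦X⟧}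

/-- The lowest nonzero coefficient of `w` is positive. -/
def LeadPos (w : A⟦X⟧) : Prop :=
  0 < toLex fun n => coeff n w

theorem leadPos_iff : LeadPos w ↔ ∃ n, (∀ i < n, coeff i w = 0) ∧ 0 < coeff n w := by
  simp only [@eq_comm _ (coeff _ w) 0]
  rfl

theorem LeadPos.mul_right (hw : LeadPos w) (hu : constantCoeff u = 1) : LeadPos (w * u) := by
  obtain ⟨n, h0, hpos⟩ := leadPos_iff.1 hw
  refine leadPos_iff.2 ⟨n, fun i hi => ?_, ?_⟩
  · rw [coeff_mul_of_constantCoeff_eq_one h0 hu hi.le, h0 i hi]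
  · rwa [coeff_mul_of_constantCoeff_eq_one h0 hu le_rfl]

theorem LeadPos.mul_left (hw : LeadPos w) (hu : constantCoeff u = 1) : LeadPos (u * w) := by
  obtain ⟨n, h0, hpos⟩ := leadPos_iff.1 hw
  refine leadPos_iff.2 ⟨n, fun i hi => ?_, ?_⟩
  · rw [coeff_mul_of_constantCoeff_eq_one' h0 hu hi.le, h0 i hi]
  · rwa [coeff_mul_of_constantCoeff_eq_one' h0 hu le_rfl]

theorem LeadPos.map {A' : Type*} [Ring A'] [LinearOrder A'] {f : A →+* A'} (hf : StrictMono f)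
    (hw : LeadPos w) : LeadPos (PowerSeries.map f w) := by
  obtain ⟨n, h0, hpos⟩ := leadPos_iff.1 hw
  exact leadPos_iff.2 ⟨n, fun i hi => by simp [h0 i hi], by simpa using hf hpos⟩

variable [IsOrderedAddMonoid A]

theorem LeadPos.add (hv : LeadPos v) (hw : LeadPos w) : LeadPos (v + w) :=
  add_pos (α := Lex (ℕ → A)) hv hw

theorem eq_zero_or_leadPos_or_leadPos_neg (w : A⟦X⟧) : w = 0 ∨ LeadPos w ∨ LeadPos (-w) := by
  rcases lt_trichotomy 0 (toLex fun n => coeff n w) with h | h | h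
  · exact .inr (.inl h)
  · exact .inl (PowerSeries.ext fun n => (congrFun h n).symm)
  · exact .inr (.inr (neg_pos (α := Lex (ℕ → A)).2 h))

end LeadPos

section OneUnits

variable {A B : Type*} [Ring A] [Ring B]

variable (A) in
/-- The group of power series with constant coefficient one. -/
noncomputable def oneUnits : Subgroup A⟦X⟧ˣ :=
  (Units.map (constantCoeff : A⟦X⟧ →+* A).toMonoidHom).ker

theorem mem_oneUnits {u : A⟦X⟧ˣ} : u ∈ oneUnits A ↔ constantCoeff (u : A⟦X⟧) = 1 := by
  simp [oneUnits, MonoidHom.mem_ker, Units.ext_iff]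

theorem constantCoeff_oneUnits (u : oneUnits A) : constantCoeff ((u : A⟦X⟧ˣ) : A⟦X⟧) = 1 :=
  mem_oneUnits.1 u.2

/-- The map induced on `oneUnits` by a ring homomorphism. -/
noncomputable def oneUnitsMap (f : A →+* B) : oneUnits A →* oneUnits B :=
  ((Units.map (PowerSeries.map f).toMonoidHom).comp (oneUnits A).subtype).codRestrict (oneUnits B)
    fun u => mem_oneUnits.2 <|
      (congrArg f (constantCoeff_oneUnits u)).trans (map_one f)

theorem oneUnitsMap_val (f : A →+* B) (u : oneUnits A) :
    ((oneUnitsMap f u : B⟦X⟧ˣ) : B⟦X⟧) = PowerSeries.map f ((u : A⟦X⟧ˣ) : A⟦X⟧) :=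
  rfl

theorem isBiCone_oneUnits [LinearOrder A] [IsOrderedAddMonoid A] :
    IsBiCone {u : oneUnits A | LeadPos (((u : A⟦X⟧ˣ) : A⟦X⟧) - 1)} where
  one_notMem := by simp [leadPos_iff]
  mul_mem u hu v hv := by
    have h := (hu.mul_right (constantCoeff_oneUnits v)).add hv
    have hdecomp : ((u.1 * v.1 : A⟦X⟧ˣ) - 1 : A⟦X⟧) = (u.1 - 1) * v.1 + (v.1 - 1) := by
      simp [sub_mul]
    exact (congrArg LeadPos hdecomp).mpr h
  conj_mem g u hu := by
    have h := (hu.mul_left (constantCoeff_oneUnits g)).mul_right (constantCoeff_oneUnits g⁻¹)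
    have hdecomp : ((g.1 * u.1 * g.1⁻¹ : A⟦X⟧ˣ) - 1 : A⟦X⟧) =
        g.1 * (u.1 - 1) * (g.1⁻¹ : A⟦X⟧ˣ) := by
      simp [mul_sub, sub_mul]
    exact (congrArg LeadPos hdecomp).mpr h
  trichotomy u := by
    rcases eq_zero_or_leadPos_or_leadPos_neg ((u.1 : A⟦X⟧) - 1) with h | h | h
    · exact .inl (Subtype.ext (Units.ext (sub_eq_zero.1 h)))
    · exact .inr (.inl h)
    · have hdecomp : ((u.1⁻¹ : A⟦X⟧ˣ) - 1 : A⟦X⟧) = -(u.1 - 1) * (u.1⁻¹ : A⟦X⟧ˣ) := by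
        simp [sub_mul]
      exact .inr (.inr <| (congrArg LeadPos hdecomp).mpr <|
        h.mul_right (constantCoeff_oneUnits u⁻¹))

/-- The power series `1 + a X`. -/
noncomputable def oneAddX (a : A) : oneUnits A :=
  ⟨{ val := 1 + PowerSeries.X * C a
     inv := PowerSeries.invOfUnit (1 + PowerSeries.X * C a) 1
     val_inv := PowerSeries.mul_invOfUnit _ _ (by simp)
     inv_val := PowerSeries.invOfUnit_mul _ _ (by simp) }, mem_oneUnits.2 (by simp)⟩

theorem oneAddX_val (a : A) :
    ((oneAddX a : A⟦X⟧ˣ) : A⟦X⟧) = 1 + PowerSeries.X * C a :=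
  rfl

theorem oneUnitsMap_oneAddX (f : A →+* B) (a : A) :
    oneUnitsMap f (oneAddX a) = oneAddX (f a) :=
  Subtype.ext (Units.ext (by simp [oneUnitsMap_val, oneAddX_val]))

theorem oneAddX_mul_val (a b : A) : ((oneAddX a * oneAddX b : A⟦X⟧ˣ) : A⟦X⟧) =
    1 + PowerSeries.X * C (a + b) + PowerSeries.X * PowerSeries.X * C (a * b) := by
  have hX : (PowerSeries.X * C a) * (PowerSeries.X * C b) =
      PowerSeries.X * PowerSeries.X * C (a * b) := by
    rw [map_mul, mul_assoc, ← mul_assoc (C a), (PowerSeries.commute_X _).eq]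
    simp only [mul_assoc]
  simp only [Units.val_mul, oneAddX_val, mul_add, add_mul, hX, one_mul, mul_one, map_add]
  abel

theorem commute_oneAddX {a b : A} (h : Commute a b) : Commute (oneAddX a) (oneAddX b) := by
  refine Subtype.ext (Units.ext ?_)
  simp only [Subgroup.coe_mul, oneAddX_mul_val, h.eq, add_comm a b]

theorem oneAddX_mul_of_mul_eq_zero {a b : A} (h : a * b = 0) :
    oneAddX a * oneAddX b = oneAddX (a + b) := by
  refine Subtype.ext (Units.ext ?_)
  simp only [Subgroup.coe_mul, oneAddX_mul_val, h, oneAddX_val, map_zero, mul_zero, add_zero]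

theorem oneAddX_zpow {a : A} (h : a * a = 0) (e : ℤ) : oneAddX a ^ e = oneAddX (e • a) := by
  have hstep (k : ℤ) : oneAddX (k • a) * oneAddX a = oneAddX ((k + 1) • a) := by
    rw [oneAddX_mul_of_mul_eq_zero (by rw [smul_mul_assoc, h, smul_zero]), add_smul, one_smul]
  induction e with
  | zero => exact Subtype.ext (Units.ext (by simp [oneAddX_val]))
  | succ n ih => rw [zpow_add_one, ih, hstep]
  | pred n ih => rw [zpow_sub_one, ih, mul_inv_eq_iff_eq_mul, hstep, sub_add_cancel]

theorem coeff_prod_oneAddX (L : List A) :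
    coeff L.length (((L.map oneAddX).prod : A⟦X⟧ˣ) : A⟦X⟧) = L.prod ∧
      ∀ k > L.length, coeff k (((L.map oneAddX).prod : A⟦X⟧ˣ) : A⟦X⟧) = 0 := by
  induction L with
  | nil => exact ⟨by simp, fun k hk => by simp [coeff_one, (show 0 < k from hk).ne']⟩
  | cons a L ih =>
    obtain ⟨hlen, hgt⟩ := ih
    have hstep (k : ℕ) : coeff (k + 1) ((((a :: L).map oneAddX).prod : A⟦X⟧ˣ) : A⟦X⟧) =
        coeff (k + 1) (((L.map oneAddX).prod : A⟦X⟧ˣ) : A⟦X⟧) +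
          a * coeff k (((L.map oneAddX).prod : A⟦X⟧ˣ) : A⟦X⟧) := by
      simp [oneAddX_val, add_mul, mul_assoc, coeff_succ_X_mul, coeff_C_mul]
    refine ⟨?_, fun k hk => ?_⟩
    · rw [List.length_cons, hstep, hgt _ (by omega), hlen, zero_add, List.prod_cons]
    · obtain ⟨k, rfl⟩ : ∃ j, k = j + 1 := ⟨k - 1, by grind⟩
      rw [List.length_cons] at hk
      rw [hstep, hgt _ (by omega), hgt _ (by omega), mul_zero, add_zero]

end OneUnits

/-! ### Trace monoids -/

section TraceMonoid

variable {α β : Type*} {ind : α → α → Prop} {ind' : β → β → Prop}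

variable (ind) in
/-- The defining relations `a * b = b * a` of the trace monoid, one for each `ind a b`. -/
inductive SwapRel : FreeMonoid α → FreeMonoid α → Prop
  | swap {a b : α} (h : ind a b) :
      SwapRel (FreeMonoid.of a * FreeMonoid.of b) (FreeMonoid.of b * FreeMonoid.of a)

variable (ind) in
/-- The trace monoid (free partially commutative monoid) in which `a` and `b` commute whenever
`ind a b`. -/
abbrev TraceMonoid := PresentedMonoid (SwapRel ind)

namespace TraceMonoid

variable (ind) in
/-- The trace of a word. -/
def trace : FreeMonoid α →* TraceMonoid ind :=
  PresentedMonoid.mk _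

theorem trace_surjective : Function.Surjective (trace ind) :=
  PresentedMonoid.surjective_mk

theorem trace_eq_iff {w w' : FreeMonoid α} :
    trace ind w = trace ind w' ↔ ConGen.Rel (SwapRel ind) w w' :=
  PresentedMonoid.mk_eq_mk_iff

theorem commute_of {a b : α} (h : ind a b) :
    Commute (trace ind (.of a)) (trace ind (.of b)) :=
  trace_eq_iff.2 (.of _ _ (.swap h))

theorem perm_of_rel {w w' : FreeMonoid α} (h : ConGen.Rel (SwapRel ind) w w') :
    w.toList.Perm w'.toList := by
  induction h with
  | of _ _ h =>
    obtain ⟨h⟩ := h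
    exact .swap _ _ _
  | refl => exact .refl _
  | symm _ ih => exact ih.symm
  | trans _ _ ih ih' => exact ih.trans ih'
  | mul _ _ ih ih' => exact ih.append ih'

/-- The monoid homomorphism induced by a map of alphabets. -/
def map (e : ind →r ind') : TraceMonoid ind →* TraceMonoid ind' :=
  PresentedMonoid.lift (fun a => trace ind' (.of (e a))) <| by
    rintro _ _ ⟨h⟩
    simpa using (commute_of (e.map_rel h)).eq

theorem map_trace (e : ind →r ind') (w : FreeMonoid α) :
    map e (trace ind w) = trace ind' (FreeMonoid.map e w) := by
  induction w with
  | one => simp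
  | of a => rfl
  | mul u w hu hw => simp only [map_mul, hu, hw]

theorem map_map_symm (e : ind ≃r ind') (m : TraceMonoid ind') :
    map e.toRelEmbedding.toRelHom (map e.symm.toRelEmbedding.toRelHom m) = m := by
  obtain ⟨w, rfl⟩ := trace_surjective m
  rw [map_trace, map_trace]
  congr 1
  induction w with
  | one => simp
  | of a => simp
  | mul u w hu hw => simp only [map_mul, hu, hw]

section Order

variable [LinearOrder α] [LinearOrder β]

theorem exists_isLeast_word (m : TraceMonoid ind) :
    ∃ l : List α, IsLeast {l | trace ind (.ofList l) = m} l := by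
  obtain ⟨w, rfl⟩ := trace_surjective m
  have hfin : {l : List α | trace ind (.ofList l) = trace ind w}.Finite :=
    (List.finite_toSet w.toList.permutations).subset fun l hl =>
      List.mem_permutations.2 (perm_of_rel (trace_eq_iff.1 hl))
  obtain ⟨l, hl, hmin⟩ := Set.exists_min_image _ id hfin ⟨w.toList, rfl⟩
  exact ⟨l, hl, hmin⟩

/-- The lexicographically least word representing a trace. -/
noncomputable def leastWord (m : TraceMonoid ind) : List α :=
  (exists_isLeast_word m).choose

theorem isLeast_leastWord (m : TraceMonoid ind) :
    IsLeast {l | trace ind (.ofList l) = m} (leastWord m) :=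
  (exists_isLeast_word m).choose_spec

theorem trace_leastWord (m : TraceMonoid ind) : trace ind (.ofList (leastWord m)) = m :=
  (isLeast_leastWord m).1

noncomputable instance : LinearOrder (TraceMonoid ind) :=
  .lift' leastWord (Function.LeftInverse.injective trace_leastWord)

theorem leastWord_map {e : ind ≃r ind'} (he : StrictMono e) (m : TraceMonoid ind) :
    leastWord (map e.toRelEmbedding.toRelHom m) = (leastWord m).map e := by
  have hmono : StrictMono (List.map e) := fun _ _ h => List.map_lt (fun _ _ h => he h) h
  refine (isLeast_leastWord _).unique ⟨?_, fun l hl => ?_⟩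
  · exact (map_trace e.toRelEmbedding.toRelHom (.ofList (leastWord m))).symm.trans
      (by rw [trace_leastWord])
  · have hback : trace ind (.ofList (l.map e.symm)) = m := by
      refine (map_trace e.symm.toRelEmbedding.toRelHom (.ofList l)).symm.trans ?_
      rw [show trace ind' (.ofList l) = _ from hl]
      exact map_map_symm e.symm m
    have hle := hmono.monotone ((isLeast_leastWord m).2 hback)
    rwa [List.map_map, show e ∘ e.symm = id from funext e.apply_symm_apply, List.map_id] at hle

theorem map_strictMono {e : ind ≃r ind'} (he : StrictMono e) :
    StrictMono (map e.toRelEmbedding.toRelHom) := by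
  intro m m' h
  have hlt : (leastWord m).map e < (leastWord m').map e := List.map_lt (fun _ _ h => he h) h
  rwa [← leastWord_map he, ← leastWord_map he] at hlt

end Order

end TraceMonoid

end TraceMonoid

section MonoidAlgebraLex

variable {R M N : Type*} [Ring R] [LinearOrder R] [LinearOrder M] [LinearOrder N]

/-- The order on a monoid algebra in which the coefficient of the least element of the support
decides positivity. -/
@[reducible]
noncomputable def monoidAlgebraLex : LinearOrder (MonoidAlgebra R M) :=
  .lift' (fun r => toLex r.coeff) fun _ _ h => MonoidAlgebra.coeff_injective (toLex.injective h)

attribute [local instance] monoidAlgebraLex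

theorem isOrderedAddMonoid_monoidAlgebra [IsOrderedAddMonoid R] :
    IsOrderedAddMonoid (MonoidAlgebra R M) where
  add_le_add_left _ _ h c := add_le_add_left (α := Lex (M →₀ R)) h (toLex c.coeff)

theorem mapDomainRingHom_strictMono [Monoid M] [Monoid N] {f : M →* N} (hf : StrictMono f) :
    StrictMono (MonoidAlgebra.mapDomainRingHom R f) := by
  rintro a b ⟨m, heq, hlt⟩
  have hcoeff (r : MonoidAlgebra R M) (k : M) :
      (MonoidAlgebra.mapDomainRingHom R f r).coeff (f k) = r.coeff k :=
    Finsupp.mapDomain_apply hf.injective _ _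
  refine ⟨f m, fun n hn => ?_, ?_⟩
  · by_cases hrange : n ∈ Set.range f
    · obtain ⟨k, rfl⟩ := hrange
      exact (hcoeff a k).trans ((heq k (hf.lt_iff_lt.1 hn)).trans (hcoeff b k).symm)
    · exact (Finsupp.mapDomain_of_notMem_range _ _ hrange).trans
        (Finsupp.mapDomain_of_notMem_range _ _ hrange).symm
  · exact ((hcoeff a m).trans_lt hlt).trans_eq (hcoeff b m).symm

end MonoidAlgebraLex

/-! ### Right-angled Artin groups -/

section RAAG

open scoped commutatorElement

variable {α : Type*} {ind : α → α → Prop}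

variable (ind) in
/-- The right-angled Artin group on `α` in which `a` and `b` commute whenever `ind a b`. -/
abbrev RAAG :=
  PresentedGroup {r : FreeGroup α | ∃ a b, ind a b ∧ r = ⁅FreeGroup.of a, FreeGroup.of b⁆}

namespace RAAG

open TraceMonoid (trace)

variable (ind) in
/-- The standard generators. -/
def of (a : α) : RAAG ind :=
  PresentedGroup.of a

theorem commute_of {a b : α} (h : ind a b) : Commute (of ind a) (of ind b) :=
  commutatorElement_eq_one_iff_commute.1 <|
    PresentedGroup.one_of_mem (Set.mem_ofPred.2 ⟨a, b, h, rfl⟩)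

section Lift

variable {G : Type*} [Group G]

/-- The universal property of the right-angled Artin group. -/
def lift (f : α → G) (hf : ∀ a b, ind a b → Commute (f a) (f b)) : RAAG ind →* G :=
  PresentedGroup.toGroup (f := f) <| by
    rintro _ ⟨a, b, h, rfl⟩
    simpa [map_commutatorElement] using commutatorElement_eq_one_iff_commute.2 (hf a b h)

@[simp]
theorem lift_of (f : α → G) (hf : ∀ a b, ind a b → Commute (f a) (f b)) (a : α) :
    lift f hf (of ind a) = f a :=
  PresentedGroup.toGroup.of _

theorem hom_ext {f g : RAAG ind →* G} (h : ∀ a, f (of ind a) = g (of ind a)) : f = g :=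
  PresentedGroup.ext h

end Lift

/-- The endomorphism induced by a relation-preserving map of the generators. -/
def map (e : ind →r ind) : RAAG ind →* RAAG ind :=
  lift (fun a => of ind (e a)) fun _ _ h => commute_of (e.map_rel h)

variable (ind) in
/-- The action on a right-angled Artin group of the automorphisms of its commutation relation. -/
def aut : (ind ≃r ind) →* MulAut (RAAG ind) where
  toFun e := (map e.toRelEmbedding.toRelHom).toMulEquiv (map e.symm.toRelEmbedding.toRelHom)
    (hom_ext fun a => by simp [map]) (hom_ext fun a => by simp [map])
  map_one' := MulEquiv.toMonoidHom_injective (hom_ext fun a => by simp [map])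
  map_mul' e e' := MulEquiv.toMonoidHom_injective (hom_ext fun a => by simp [map])

@[simp]
theorem aut_of (e : ind ≃r ind) (a : α) : aut ind e (of ind a) = of ind (e a) := by
  simp [aut, map]

section Syllables

/-- The product `a₁ ^ e₁ * ⋯ * aₙ ^ eₙ`. -/
def syllableProd (L : List (α × ℤ)) : RAAG ind :=
  (L.map fun s => of ind s.1 ^ s.2).prod

theorem syllableProd_append (L L' : List (α × ℤ)) :
    (syllableProd (L ++ L') : RAAG ind) = syllableProd L * syllableProd L' := by
  simp [syllableProd]

theorem exists_syllableProd_eq (g : RAAG ind) : ∃ L : List (α × ℤ), syllableProd L = g := by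
  obtain ⟨g, rfl⟩ := PresentedGroup.mk_surjective _ g
  induction g using FreeGroup.induction_on with
  | C1 => exact ⟨[], rfl⟩
  | of a => exact ⟨[(a, 1)], by simp [syllableProd, of, PresentedGroup.of]⟩
  | inv_of a _ => exact ⟨[(a, -1)], by simp [syllableProd, of, PresentedGroup.of]⟩
  | mul g h hg hh =>
    obtain ⟨⟨L, hL⟩, ⟨L', hL'⟩⟩ := And.intro hg hh
    exact ⟨L ++ L', by rw [syllableProd_append, hL, hL', map_mul]⟩

variable (ind) in
/-- Every syllable product along the word `w` is also a syllable product along `w'`. -/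
def Rearranges (w w' : FreeMonoid α) : Prop :=
  ∀ L : List (α × ℤ), L.map Prod.fst = w.toList →
    ∃ L' : List (α × ℤ), L'.map Prod.fst = w'.toList ∧
      (syllableProd L' : RAAG ind) = syllableProd L

theorem Rearranges.trans {u v w : FreeMonoid α} (h : Rearranges ind u v)
    (h' : Rearranges ind v w) : Rearranges ind u w := by
  intro L hL
  obtain ⟨L', hL', heq⟩ := h L hL
  obtain ⟨L'', hL'', heq'⟩ := h' L' hL'
  exact ⟨L'', hL'', heq'.trans heq⟩

theorem Rearranges.mul {u u' v v' : FreeMonoid α} (h : Rearranges ind u u')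
    (h' : Rearranges ind v v') : Rearranges ind (u * v) (u' * v') := by
  intro L hL
  obtain ⟨L₁, L₂, rfl, hL₁, hL₂⟩ := List.map_eq_append_iff.1 hL
  obtain ⟨L₁', hL₁', heq₁⟩ := h L₁ hL₁
  obtain ⟨L₂', hL₂', heq₂⟩ := h' L₂ hL₂
  exact ⟨L₁' ++ L₂', by simp [hL₁', hL₂'], by
    rw [syllableProd_append, syllableProd_append, heq₁, heq₂]⟩

theorem rearranges_of_commute {a b : α} (h : Commute (of ind a) (of ind b)) :
    Rearranges ind (.of a * .of b) (.of b * .of a) := by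
  intro L hL
  obtain ⟨⟨a', k⟩, L₁, rfl, rfl, hL₁⟩ := List.map_eq_cons_iff.1 hL
  obtain ⟨⟨b', l⟩, L₂, rfl, rfl, hL₂⟩ := List.map_eq_cons_iff.1 hL₁
  obtain rfl : L₂ = [] := List.map_eq_nil_iff.1 hL₂
  exact ⟨[(b', l), (a', k)], rfl, by simpa [syllableProd] using (h.symm.zpow_zpow l k).eq⟩

theorem rearranges_of_rel {w w' : FreeMonoid α} (h : ConGen.Rel (SwapRel ind) w w') :
    Rearranges ind w w' ∧ Rearranges ind w' w := by
  induction h with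
  | of _ _ h =>
    obtain ⟨h⟩ := h
    exact ⟨rearranges_of_commute (commute_of h), rearranges_of_commute (commute_of h).symm⟩
  | refl => exact ⟨fun L hL => ⟨L, hL, rfl⟩, fun L hL => ⟨L, hL, rfl⟩⟩
  | symm _ ih => exact ih.symm
  | trans _ _ ih ih' => exact ⟨ih.1.trans ih'.1, ih'.2.trans ih.2⟩
  | mul _ _ ih ih' => exact ⟨ih.1.mul ih'.1, ih.2.mul ih'.2⟩

end Syllables

/-- A trace is square-free if no word representing it repeats a letter in consecutive
positions. -/
def SquareFree (m : TraceMonoid ind) : Prop :=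
  ∀ (a : α) (p q : TraceMonoid ind), m ≠ p * (trace ind (.of a) * trace ind (.of a)) * q

theorem SquareFree.of_mul_left {m n : TraceMonoid ind} (h : SquareFree (n * m)) :
    SquareFree m := by
  rintro a p q rfl
  exact h a (n * p) q (by simp only [mul_assoc])

theorem exists_shorter_of_not_squareFree {L : List (α × ℤ)}
    (h : ¬ SquareFree (trace ind (.ofList (L.map Prod.fst)))) :
    ∃ L' : List (α × ℤ), L'.length < L.length ∧
      (syllableProd L' : RAAG ind) = syllableProd L := by
  obtain ⟨a, p, q, hm⟩ : ∃ a p q, trace ind (.ofList (L.map Prod.fst)) =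
      p * (trace ind (.of a) * trace ind (.of a)) * q := by
    simpa [SquareFree] using h
  obtain ⟨p, rfl⟩ := TraceMonoid.trace_surjective p
  obtain ⟨q, rfl⟩ := TraceMonoid.trace_surjective q
  simp only [← map_mul] at hm
  obtain ⟨L', hL', heq⟩ := (rearranges_of_rel (TraceMonoid.trace_eq_iff.1 hm)).1 L rfl
  have hlen : L'.length = L.length := by
    have hperm := (TraceMonoid.perm_of_rel (TraceMonoid.trace_eq_iff.1 hm)).length_eq
    rw [← hL'] at hperm
    simpa using hperm.symm
  obtain ⟨L'', Q, rfl, hL'', -⟩ := List.map_eq_append_iff.1 hL'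
  obtain ⟨P, M, rfl, -, hM⟩ := List.map_eq_append_iff.1 hL''
  obtain ⟨⟨_, k⟩, M₁, rfl, rfl, hM₁⟩ := List.map_eq_cons_iff.1 hM
  obtain ⟨⟨b, l⟩, M₂, rfl, rfl, hM₂⟩ := List.map_eq_cons_iff.1 hM₁
  obtain rfl : M₂ = [] := List.map_eq_nil_iff.1 hM₂
  refine ⟨P ++ [(b, k + l)] ++ Q, ?_, ?_⟩
  · simp at hlen ⊢
    omega
  · rw [← heq]
    simp [syllableProd, zpow_add, mul_assoc]

theorem exists_reduced (g : RAAG ind) : ∃ L : List (α × ℤ), syllableProd L = g ∧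
    (∀ s ∈ L, s.2 ≠ 0) ∧ SquareFree (trace ind (.ofList (L.map Prod.fst))) := by
  classical
  have hex : ∃ n, ∃ L : List (α × ℤ), L.length = n ∧ syllableProd L = g :=
    (exists_syllableProd_eq g).imp' List.length fun L hL => ⟨L, rfl, hL⟩
  obtain ⟨L, hlen, rfl⟩ := Nat.find_spec hex
  have hmin (L' : List (α × ℤ)) (heq : (syllableProd L' : RAAG ind) = syllableProd L) :
      ¬ L'.length < L.length :=
    fun hlt => Nat.find_min hex (hlen ▸ hlt) ⟨L', rfl, heq⟩
  refine ⟨L, rfl, fun s hs h0 => ?_, ?_⟩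
  · obtain ⟨P, Q, rfl⟩ := List.append_of_mem hs
    exact hmin (P ++ Q) (by simp [syllableProd, h0]) (by simp)
  · by_contra h
    obtain ⟨L', hlt, heq⟩ := exists_shorter_of_not_squareFree h
    exact hmin L' heq hlt

end RAAG

end RAAG

/-! ### Bi-ordering right-angled Artin groups by the Magnus expansion -/

namespace RAAG

open TraceMonoid (trace)

variable {α : Type*} {ind : α → α → Prop}

section MagnusOf

variable {A B : Type*} [Ring A] [Ring B] (c : α → A) (hc : ∀ a b, ind a b → Commute (c a) (c b))

/-- The Magnus-type homomorphism sending the generator `a` to `1 + c a X`. -/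
noncomputable def magnusOf : RAAG ind →* oneUnits A :=
  lift (fun a => oneAddX (c a)) fun a b h => commute_oneAddX (hc a b h)

theorem magnusOf_of (a : α) : magnusOf c hc (of ind a) = oneAddX (c a) :=
  lift_of _ _ a

theorem oneUnitsMap_magnusOf (f : A →+* B) (g : RAAG ind) :
    oneUnitsMap f (magnusOf c hc g) =
      magnusOf (fun a => f (c a)) (fun a b h => (hc a b h).map f) g :=
  DFunLike.congr_fun (f := (oneUnitsMap f).comp (magnusOf c hc))
    (hom_ext fun a => by simp [magnusOf_of, oneUnitsMap_oneAddX]) g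

variable {c}

theorem magnusOf_syllableProd (hsq : ∀ a, c a * c a = 0) (L : List (α × ℤ)) :
    magnusOf c hc (syllableProd L) = ((L.map fun s => s.2 • c s.1).map oneAddX).prod := by
  simp [syllableProd, map_list_prod, magnusOf_of, oneAddX_zpow, hsq, Function.comp_def]

theorem magnusOf_syllableProd_ne_one (hsq : ∀ a, c a * c a = 0) {L : List (α × ℤ)} (hL : L ≠ [])
    (hprod : (L.map fun s => s.2 • c s.1).prod ≠ 0) : magnusOf c hc (syllableProd L) ≠ 1 := by
  intro h
  have hcoeff := (coeff_prod_oneAddX (L.map fun s => s.2 • c s.1)).1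
  rw [← magnusOf_syllableProd hc hsq, h] at hcoeff
  exact hprod (hcoeff.symm.trans (by simp [PowerSeries.coeff_one, hL]))

end MagnusOf

section SquareFreeRep

open Classical in
/-- The operator on the free abelian group on the square-free traces sending the trace `m` to
`n * m` if the latter is square-free and to `0` otherwise. -/
noncomputable def squareFreeOp (n : TraceMonoid ind) :
    Module.End ℤ ({m : TraceMonoid ind // SquareFree m} →₀ ℤ) :=
  Finsupp.linearCombination ℤ fun m =>
    if h : SquareFree (n * m.1) then Finsupp.single ⟨n * m, h⟩ 1 else 0

theorem squareFreeOp_single_of_squareFree {n : TraceMonoid ind}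
    {m : {m : TraceMonoid ind // SquareFree m}} (h : SquareFree (n * m.1)) :
    squareFreeOp n (Finsupp.single m 1) = Finsupp.single ⟨n * m, h⟩ 1 := by
  simp [squareFreeOp, h]

theorem squareFreeOp_single_of_not_squareFree {n : TraceMonoid ind}
    {m : {m : TraceMonoid ind // SquareFree m}} (h : ¬ SquareFree (n * m.1)) :
    squareFreeOp n (Finsupp.single m 1) = 0 := by
  simp [squareFreeOp, h]

variable (ind) in
/-- The representation of the trace monoid on the free abelian group on its square-free
elements. -/
noncomputable def squareFreeRep :
    TraceMonoid ind →* Module.End ℤ ({m : TraceMonoid ind // SquareFree m} →₀ ℤ) where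
  toFun := squareFreeOp
  map_one' := by
    refine Finsupp.lhom_ext' fun m => LinearMap.ext_ring ?_
    simpa using squareFreeOp_single_of_squareFree (n := 1) (m := m) (by simpa using m.2)
  map_mul' n n' := by
    refine Finsupp.lhom_ext' fun m => LinearMap.ext_ring ?_
    change squareFreeOp (n * n') (.single m 1) = squareFreeOp n (squareFreeOp n' (.single m 1))
    by_cases h' : SquareFree (n' * m.1)
    · rw [squareFreeOp_single_of_squareFree h']
      by_cases h : SquareFree (n * (n' * m.1))
      · rw [squareFreeOp_single_of_squareFree (m := ⟨n' * m.1, h'⟩) h,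
          squareFreeOp_single_of_squareFree (by rwa [mul_assoc])]
        simp only [mul_assoc]
      · rw [squareFreeOp_single_of_not_squareFree (m := ⟨n' * m.1, h'⟩) h,
          squareFreeOp_single_of_not_squareFree (by rwa [mul_assoc])]
    · have h : ¬ SquareFree (n * n' * m.1) := fun h =>
        h' (by rw [mul_assoc] at h; exact h.of_mul_left)
      rw [squareFreeOp_single_of_not_squareFree h, squareFreeOp_single_of_not_squareFree h',
        map_zero]

theorem squareFreeRep_of_mul_self (a : α) :
    squareFreeRep ind (trace ind (.of a)) * squareFreeRep ind (trace ind (.of a)) = 0 := by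
  rw [← map_mul]
  refine Finsupp.lhom_ext' fun m => LinearMap.ext_ring ?_
  exact squareFreeOp_single_of_not_squareFree fun h => h a 1 m (by rw [one_mul])

theorem smul_squareFreeRep_ne_zero {z : ℤ} (hz : z ≠ 0) {n : TraceMonoid ind}
    (hn : SquareFree n) : z • squareFreeRep ind n ≠ 0 := by
  intro h
  have hone : SquareFree (1 : TraceMonoid ind) :=
    (by simpa using hn : SquareFree (n * 1)).of_mul_left
  have happly := LinearMap.congr_fun h (Finsupp.single ⟨1, hone⟩ 1)
  have hop := squareFreeOp_single_of_squareFree (n := n) (m := ⟨1, hone⟩) (by simpa using hn)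
  change z • squareFreeOp n (.single ⟨1, hone⟩ 1) = 0 at happly
  rw [hop, Finsupp.smul_single, Finsupp.single_eq_zero] at happly
  exact hz (by simpa using happly)

theorem prod_smul_squareFreeRep (L : List (α × ℤ)) :
    (L.map fun s => s.2 • squareFreeRep ind (trace ind (.of s.1))).prod =
      (L.map Prod.snd).prod • squareFreeRep ind (trace ind (.ofList (L.map Prod.fst))) := by
  induction L with
  | nil => simp
  | cons s L ih =>
    simp only [List.map_cons, List.prod_cons, ih, FreeMonoid.ofList_cons, map_mul,
      smul_mul_smul_comm]

end SquareFreeRep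

section Magnus

variable (ind) in
/-- The Magnus expansion of a right-angled Artin group in power series over the integral monoid
algebra of the corresponding trace monoid. -/
noncomputable def magnus : RAAG ind →* oneUnits (MonoidAlgebra ℤ (TraceMonoid ind)) :=
  magnusOf (fun a => MonoidAlgebra.of ℤ _ (trace ind (.of a))) fun _ _ h =>
    (TraceMonoid.commute_of h).map _

theorem magnus_injective : Function.Injective (magnus ind) := by
  refine (injective_iff_map_eq_one _).2 fun g hg => ?_
  obtain ⟨L, rfl, hne, hsf⟩ := exists_reduced g
  by_contra hL
  have hzero : (L.map Prod.snd).prod ≠ 0 := by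
    simpa [List.prod_eq_zero_iff] using fun a ha => hne (a, 0) ha rfl
  refine magnusOf_syllableProd_ne_one
    (c := fun a => squareFreeRep ind (trace ind (.of a)))
    (fun a b h => (TraceMonoid.commute_of h).map _) squareFreeRep_of_mul_self
    (L := L) (by rintro rfl; exact hL rfl) ?_ ?_
  · rw [prod_smul_squareFreeRep]
    exact smul_squareFreeRep_ne_zero hzero hsf
  · have h := congrArg
      (oneUnitsMap (MonoidAlgebra.lift ℤ _ (TraceMonoid ind) (squareFreeRep ind)).toRingHom) hg
    rw [magnus, oneUnitsMap_magnusOf, map_one] at h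
    simpa using h

theorem magnus_aut (e : ind ≃r ind) (g : RAAG ind) :
    magnus ind (aut ind e g) = oneUnitsMap
      (MonoidAlgebra.mapDomainRingHom ℤ (TraceMonoid.map e.toRelEmbedding.toRelHom))
      (magnus ind g) :=
  DFunLike.congr_fun (f := (magnus ind).comp (aut ind e).toMonoidHom)
    (g := (oneUnitsMap _).comp (magnus ind))
    (hom_ext fun a => by
      simp [magnus, magnusOf_of, oneUnitsMap_oneAddX, TraceMonoid.map_trace]) g

attribute [local instance] monoidAlgebraLex isOrderedAddMonoid_monoidAlgebra

theorem exists_isBiCone_semidirectProduct [LinearOrder α] {H : Type*} [Group H] {Q : Set H}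
    (hQ : IsBiCone Q) (φ : H →* (ind ≃r ind)) (hφ : ∀ h, StrictMono (φ h)) :
    ∃ P : Set (RAAG ind ⋊[(aut ind).comp φ] H), IsBiCone P := by
  refine ⟨_, (isBiCone_oneUnits.preimage magnus_injective).semidirectProduct hQ fun h g hg => ?_⟩
  have hpos := hg.map (mapDomainRingHom_strictMono (R := ℤ) (TraceMonoid.map_strictMono (hφ h)))
  rw [map_sub, map_one, ← oneUnitsMap_val, ← magnus_aut] at hpos
  exact hpos

end Magnus

end RAAG

/-! ### Bi-ordering groups of homeomorphisms of the line -/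

section MovesUpFirst

open Filter Set
open scoped Topology

variable {α : Type*} [LinearOrder α] [TopologicalSpace α] [OrderTopology α]

theorem tendsto_nhdsGT_orderIso (f : α ≃o α) (c : α) : Tendsto f (𝓝[>] c) (𝓝[>] (f c)) :=
  f.continuous.continuousWithinAt.tendsto_nhdsWithin fun _ ht => f.lt_iff_lt.2 ht

theorem tendsto_nhdsGE_orderIso (f : α ≃o α) (c : α) : Tendsto f (𝓝[≥] c) (𝓝[≥] (f c)) :=
  f.continuous.continuousWithinAt.tendsto_nhdsWithin fun _ ht => f.le_iff_le.2 ht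

/-- `f` is the identity up to some point, immediately to the right of which it moves points up.
These are the positive elements of bi-orders on groups of homeomorphisms of the line. -/
def MovesUpFirst (f : α ≃o α) : Prop :=
  ∃ c, (∀ t ≤ c, f t = t) ∧ ∀ᶠ t in 𝓝[>] c, t < f t

theorem MovesUpFirst.mul {f g : α ≃o α} (hf : MovesUpFirst f) (hg : MovesUpFirst g) :
    MovesUpFirst (f * g) := by
  obtain ⟨c, hc, hup⟩ := hf
  obtain ⟨c', hc', hup'⟩ := hg
  rcases lt_trichotomy c c' with h | rfl | h
  · refine ⟨c, fun t ht => ?_, ?_⟩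
    · rw [RelIso.mul_apply, hc' t (ht.trans h.le), hc t ht]
    · filter_upwards [hup, eventually_nhdsWithin_of_eventually_nhds (eventually_lt_nhds h)]
        with t htf htc'
      rwa [RelIso.mul_apply, hc' t htc'.le]
  · refine ⟨c, fun t ht => ?_, ?_⟩
    · rw [RelIso.mul_apply, hc' t ht, hc t ht]
    · filter_upwards [hup, hup'] with t htf htg
      exact htf.trans (f.lt_iff_lt.2 htg)
  · refine ⟨c', fun t ht => ?_, ?_⟩
    · rw [RelIso.mul_apply, hc' t ht, hc t (ht.trans h.le)]
    · filter_upwards [hup', eventually_nhdsWithin_of_eventually_nhds (eventually_lt_nhds h)]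
        with t htg htc
      exact (hc t htc.le).symm.trans_lt (f.lt_iff_lt.2 htg)

theorem MovesUpFirst.conj (g : α ≃o α) {f : α ≃o α} (hf : MovesUpFirst f) :
    MovesUpFirst (g * f * g⁻¹) := by
  obtain ⟨c, hc, hup⟩ := hf
  have happly (t : α) : (g * f * g⁻¹) t = g (f (g.symm t)) := rfl
  refine ⟨g c, fun t ht => ?_, ?_⟩
  · rw [happly, hc _ (g.symm_apply_le.2 ht), g.apply_symm_apply]
  · have htend := tendsto_nhdsGT_orderIso g.symm (g c)
    rw [g.symm_apply_apply] at htend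
    filter_upwards [htend.eventually hup] with t ht
    rw [happly]
    exact g.symm_apply_lt.1 ht

theorem not_movesUpFirst_one [DenselyOrdered α] [NoMaxOrder α] :
    ¬ MovesUpFirst (1 : α ≃o α) := by
  rintro ⟨c, -, hup⟩
  obtain ⟨t, ht⟩ := hup.exists
  exact lt_irrefl t ht

/-- The orientation-preserving homeomorphisms of the line that fix all negative numbers and are
affine immediately to the right of every point. -/
def rightAffine : Subgroup (ℝ ≃o ℝ) where
  carrier := {f | (∀ t ≤ 0, f t = t) ∧ ∀ c, ∃ a b : ℝ, ∀ᶠ t in 𝓝[≥] c, f t = a * t + b}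
  one_mem' := ⟨fun _ _ => rfl, fun c => ⟨1, 0, .of_forall fun t => by simp⟩⟩
  mul_mem' := by
    rintro f g ⟨hf0, hf⟩ ⟨hg0, hg⟩
    refine ⟨fun t ht => by rw [RelIso.mul_apply, hg0 t ht, hf0 t ht], fun c => ?_⟩
    obtain ⟨a, b, hgc⟩ := hg c
    obtain ⟨a', b', hfc⟩ := hf (g c)
    refine ⟨a' * a, a' * b + b', ?_⟩
    filter_upwards [hgc, (tendsto_nhdsGE_orderIso g c).eventually hfc] with t htg htf
    rw [RelIso.mul_apply, htf, htg]
    ring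
  inv_mem' := by
    rintro f ⟨hf0, hf⟩
    refine ⟨fun t ht => f.symm_apply_eq.2 (hf0 t ht).symm, fun c => ?_⟩
    obtain ⟨a, b, hfc⟩ := hf (f.symm c)
    have ha : a ≠ 0 := by
      rintro rfl
      have hconst := hfc.self_of_nhdsWithin self_mem_Ici
      obtain ⟨t, ht, hlt⟩ := ((hfc.filter_mono (nhdsWithin_mono _ Ioi_subset_Ici_self)).and
        self_mem_nhdsWithin).exists
      exact (f.lt_iff_lt.2 hlt).ne (by rw [ht, hconst, zero_mul, zero_mul])
    refine ⟨a⁻¹, -b / a, ?_⟩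
    filter_upwards [(tendsto_nhdsGE_orderIso f.symm c).eventually hfc] with t ht
    rw [f.apply_symm_apply] at ht
    change f.symm t = _
    field_simp
    linarith

theorem exists_isGreatest_fixed {f : ℝ ≃o ℝ} (hf : ∀ t ≤ 0, f t = t) (hne : f ≠ 1) :
    ∃ c, IsGreatest {c | ∀ t ≤ c, f t = t} c := by
  set S := {c | ∀ t ≤ c, f t = t}
  have hbdd : BddAbove S := by
    by_contra h
    refine hne (RelIso.ext fun t => ?_)
    obtain ⟨c, hc, htc⟩ := not_bddAbove_iff.1 h t
    exact hc t htc.le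
  have hlt : Iio (sSup S) ⊆ {t | f t = t} := fun t ht =>
    have ⟨c, hc, htc⟩ := exists_lt_of_lt_csSup (⟨0, hf⟩ : S.Nonempty) ht
    (show ∀ t ≤ c, f t = t from hc) t htc.le
  have hle := closure_minimal hlt (isClosed_eq f.continuous continuous_id)
  rw [closure_Iio] at hle
  exact ⟨sSup S, fun t ht => hle ht, fun c hc => le_csSup hbdd hc⟩

theorem eq_one_or_movesUpFirst_or_movesUpFirst_inv {f : ℝ ≃o ℝ} (hf : f ∈ rightAffine) :
    f = 1 ∨ MovesUpFirst f ∨ MovesUpFirst f⁻¹ := by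
  by_cases hne : f = 1
  · exact .inl hne
  obtain ⟨c, hc, hmax⟩ := exists_isGreatest_fixed hf.1 hne
  have hfc : f c = c := hc c le_rfl
  obtain ⟨a, b, haff⟩ := hf.2 c
  have hcaff : c = a * c + b := hfc.symm.trans (haff.self_of_nhdsWithin self_mem_Ici)
  have haff' := haff.filter_mono (nhdsWithin_mono c Ioi_subset_Ici_self)
  rcases lt_trichotomy a 1 with ha | rfl | ha
  · have htend := tendsto_nhdsGT_orderIso f.symm c
    rw [f.symm_apply_eq.2 hfc.symm] at htend
    refine .inr (.inr ⟨c, fun t ht => f.symm_apply_eq.2 (hc t ht).symm, htend.eventually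
      (p := fun s => f s < s) ?_ |>.mono fun t ht => by rwa [f.apply_symm_apply] at ht⟩)
    filter_upwards [haff', self_mem_nhdsWithin] with t ht hct
    nlinarith [mem_Ioi.1 hct]
  · obtain ⟨d, hcd, hd⟩ := (mem_nhdsGE_iff_exists_Icc_subset).1 haff
    refine absurd (hmax fun t ht => ?_) (not_le.2 hcd)
    rcases le_total t c with htc | htc
    · exact hc t htc
    · linarith [show f t = 1 * t + b from hd ⟨htc, ht⟩]
  · refine .inr (.inl ⟨c, hc, ?_⟩)
    filter_upwards [haff', self_mem_nhdsWithin] with t ht hct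
    nlinarith [mem_Ioi.1 hct]

theorem isBiCone_rightAffine : IsBiCone {f : rightAffine | MovesUpFirst (f : ℝ ≃o ℝ)} where
  one_notMem := not_movesUpFirst_one
  mul_mem _ hf _ hg := hf.mul hg
  conj_mem g _ hf := MovesUpFirst.conj (g : ℝ ≃o ℝ) hf
  trichotomy f := by
    simpa using eq_one_or_movesUpFirst_or_movesUpFirst_inv f.2

end MovesUpFirst

section Stretch

open Filter Set
open scoped Topology

/-- The homeomorphism of the line that is the identity up to `j`, doubles the length of the
interval from `j` to `j + 1` and is translation by `1` from there on. -/
noncomputable def stretch (j : ℕ) : ℝ ≃o ℝ :=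
  StrictMono.orderIsoOfRightInverse
    (fun t => if t ≤ j then t else if t ≤ j + 1 then 2 * t - j else t + 1)
    (fun s t hst => by dsimp only; split_ifs <;> linarith)
    (fun t => if t ≤ j then t else if t ≤ j + 2 then (t + j) / 2 else t - 1)
    (fun t => by dsimp only; split_ifs <;> linarith)

theorem stretch_apply (j : ℕ) (t : ℝ) :
    stretch j t = if t ≤ j then t else if t ≤ j + 1 then 2 * t - j else t + 1 :=
  rfl

theorem stretch_of_le {j : ℕ} {t : ℝ} (h : t ≤ j) : stretch j t = t := by
  rw [stretch_apply, if_pos h]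

theorem stretch_of_ge {j : ℕ} {t : ℝ} (h : (j : ℝ) + 1 ≤ t) : stretch j t = t + 1 := by
  rw [stretch_apply]
  split_ifs <;> linarith

theorem stretch_midpoint (j : ℕ) : stretch j (j + 1 / 2) = j + 1 := by
  rw [stretch_apply]
  split_ifs <;> linarith

theorem le_stretch (j : ℕ) (t : ℝ) : t ≤ stretch j t := by
  rw [stretch_apply]
  split_ifs <;> linarith

theorem stretch_succ (j : ℕ) (t : ℝ) : stretch (j + 1) (t + 1) = stretch j t + 1 := by
  simp only [stretch_apply]
  push_cast
  split_ifs <;> linarith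

theorem stretch_mul_stretch {k n : ℕ} (h : k < n) :
    stretch k * stretch n = stretch (n + 1) * stretch k := by
  ext t
  have hcast : (k : ℝ) + 1 ≤ n := by exact_mod_cast h
  simp only [RelIso.mul_apply, stretch_apply]
  push_cast
  split_ifs <;> linarith

theorem stretch_mem_rightAffine (j : ℕ) : stretch j ∈ rightAffine := by
  refine ⟨fun t ht => stretch_of_le (ht.trans j.cast_nonneg), fun c => ?_⟩
  rcases lt_or_ge c j with hc | hc
  · refine ⟨1, 0, ?_⟩
    filter_upwards [Ico_mem_nhdsGE hc] with t ht
    rw [stretch_of_le ht.2.le, one_mul, add_zero]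
  rcases lt_or_ge c (j + 1) with hc' | hc'
  · refine ⟨2, -j, ?_⟩
    filter_upwards [Ico_mem_nhdsGE hc'] with t ht
    rw [stretch_apply]
    split_ifs <;> linarith [ht.1, ht.2]
  · refine ⟨1, 1, ?_⟩
    filter_upwards [self_mem_nhdsWithin] with t ht
    rw [stretch_of_ge (hc'.trans ht), one_mul]

end Stretch

/-! ### Thompson's group with two kinds of labelled generators -/

section LabelledThompson

variable (R J : Type*)

/-- The defining relators of `LabelledThompson R J`. The generator `(none, n)` stands for the
standard generator `x n` of Thompson's group `F`. -/
def labelledThompsonRels : Set (FreeGroup (Option (R ⊕ J) × ℕ)) :=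
  {g | ∃ (y : Option (R ⊕ J)) (n k : ℕ), k < n ∧
    (g = .of (y, n) * .of (none, k) * (.of (none, k) * .of (y, n + 1))⁻¹ ∨
     ∃ r : R, g = .of (y, n) * .of (some (.inl r), k) * (.of (some (.inl r), k) * .of (y, n))⁻¹)}

/-- The group generated by the standard generators `x n` of Thompson's group `F` and by sequences
of generators, one for each label in `R ⊕ J`. All sequences are shifted by the `x k` with smaller
index and commute with the generators with smaller index labelled by `R`. A generator `(r, n)`
should be imagined as supported in the `n`-th leaf of a forest, a generator `(j, n)` in all leaves
from the `n`-th on. -/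
abbrev LabelledThompson := PresentedGroup (labelledThompsonRels R J)

end LabelledThompson

namespace LabelledThompson

variable {R J : Type*}

section Presentation

/-- The generators of `LabelledThompson R J`. -/
def gen (y : Option (R ⊕ J)) (n : ℕ) : LabelledThompson R J :=
  PresentedGroup.of (y, n)

/-- The standard generators of Thompson's group `F` inside `LabelledThompson R J`. -/
abbrev x (n : ℕ) : LabelledThompson R J :=
  gen none n

theorem gen_mul_x (y : Option (R ⊕ J)) {k n : ℕ} (h : k < n) :
    gen y n * x k = x k * gen y (n + 1) := by
  have hone := PresentedGroup.one_of_mem (rels := labelledThompsonRels R J) ⟨y, n, k, h, .inl rfl⟩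
  rwa [map_mul, map_inv, mul_inv_eq_one, map_mul, map_mul] at hone

theorem commute_gen (y : Option (R ⊕ J)) (r : R) {k n : ℕ} (h : k < n) :
    Commute (gen y n) (gen (some (.inl r)) k) := by
  have hone := PresentedGroup.one_of_mem (rels := labelledThompsonRels R J)
    ⟨y, n, k, h, .inr ⟨r, rfl⟩⟩
  rwa [map_mul, map_inv, mul_inv_eq_one, map_mul, map_mul] at hone

theorem hom_ext {G : Type*} [Group G] {f g : LabelledThompson R J →* G}
    (h : ∀ y n, f (gen y n) = g (gen y n)) : f = g :=
  PresentedGroup.ext fun p => h p.1 p.2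

variable {G : Type*} [Group G] (f : Option (R ⊕ J) → ℕ → G)
  (hx : ∀ y n k, k < n → f y n * f none k = f none k * f y (n + 1))
  (hr : ∀ y r n k, k < n → Commute (f y n) (f (some (.inl r)) k))

/-- The universal property of `LabelledThompson R J`. -/
def lift : LabelledThompson R J →* G :=
  PresentedGroup.toGroup (f := fun p => f p.1 p.2) <| by
    rintro g ⟨y, n, k, hk, rfl | ⟨r, rfl⟩⟩ <;>
      simp only [map_mul, map_inv, mul_inv_eq_one, FreeGroup.lift_apply_of]
    · exact hx y n k hk
    · exact hr y r n k hk

@[simp]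
theorem lift_gen (y : Option (R ⊕ J)) (n : ℕ) : lift f hx hr (gen y n) = f y n :=
  PresentedGroup.toGroup.of _

end Presentation

section ToHomeo

/-- The action on the line through which `x n` acts as the inverse of `stretch n`, while the
labelled generators act trivially. -/
noncomputable def toHomeo : LabelledThompson R J →* (ℝ ≃o ℝ) :=
  lift (fun y n => y.elim (stretch n)⁻¹ fun _ => 1)
    (by
      rintro (_ | y) n k hk
      · simp only [Option.elim, ← mul_inv_rev, stretch_mul_stretch hk]
      · simp)
    fun _ _ _ _ _ => Commute.one_right _

@[simp]
theorem toHomeo_x (n : ℕ) : toHomeo (x n : LabelledThompson R J) = (stretch n)⁻¹ :=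
  lift_gen ..

variable (R J) in
/-- The copy of Thompson's group `F` in `LabelledThompson R J`. -/
def thompson : Subgroup (LabelledThompson R J) :=
  .closure (Set.range x)

theorem x_mem_thompson (n : ℕ) : (x n : LabelledThompson R J) ∈ thompson R J :=
  Subgroup.subset_closure ⟨n, rfl⟩

theorem thompson_le_comap_rightAffine : thompson R J ≤ rightAffine.comap toHomeo :=
  (Subgroup.closure_le _).2 <| Set.range_subset_iff.2 fun n => by
    simpa using stretch_mem_rightAffine n

end ToHomeo

section Words

/-- The product of the generators `x j` for `j` in a list. -/
def xWord (l : List ℕ) : LabelledThompson R J :=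
  (l.map x).prod

@[simp]
theorem xWord_nil : (xWord [] : LabelledThompson R J) = 1 :=
  rfl

@[simp]
theorem xWord_cons (j : ℕ) (l : List ℕ) :
    (xWord (j :: l) : LabelledThompson R J) = x j * xWord l :=
  List.prod_cons

theorem xWord_append (l l' : List ℕ) :
    (xWord (l ++ l') : LabelledThompson R J) = xWord l * xWord l' := by
  simp [xWord]

theorem xWord_append_singleton (l : List ℕ) (j : ℕ) :
    (xWord (l ++ [j]) : LabelledThompson R J) = xWord l * x j := by
  simp [xWord]

/-- The composite of the `stretch j` for `j` in a list, the head of the list acting first. -/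
noncomputable def stretchWord : List ℕ → (ℝ ≃o ℝ)
  | [] => 1
  | j :: l => stretchWord l * stretch j

theorem stretchWord_append_singleton (l : List ℕ) (j : ℕ) :
    stretchWord (l ++ [j]) = stretch j * stretchWord l := by
  induction l with
  | nil => rfl
  | cons i l ih => rw [List.cons_append, stretchWord, ih, stretchWord, mul_assoc]

theorem toHomeo_xWord (l : List ℕ) :
    toHomeo (xWord l : LabelledThompson R J) = (stretchWord l)⁻¹ := by
  induction l with
  | nil => simp [stretchWord]
  | cons j l ih => rw [xWord_cons, map_mul, ih, toHomeo_x, stretchWord, mul_inv_rev]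

theorem stretchWord_of_le {l : List ℕ} {m : ℕ} (h : ∀ j ∈ l, m ≤ j) {t : ℝ} (ht : t ≤ m) :
    stretchWord l t = t := by
  induction l with
  | nil => rfl
  | cons j l ih =>
    obtain ⟨hj, hl⟩ := List.forall_mem_cons.1 h
    rw [stretchWord, RelIso.mul_apply, stretch_of_le (ht.trans (Nat.cast_le.2 hj)), ih hl]

theorem le_stretchWord (l : List ℕ) (t : ℝ) : t ≤ stretchWord l t := by
  induction l generalizing t with
  | nil => exact le_rfl
  | cons j l ih => exact (le_stretch j t).trans (ih _)

theorem stretchWord_map_succ (l : List ℕ) (t : ℝ) :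
    stretchWord (l.map (· + 1)) (t + 1) = stretchWord l t + 1 := by
  induction l generalizing t with
  | nil => rfl
  | cons j l ih => rw [List.map_cons, stretchWord, RelIso.mul_apply, stretch_succ, ih]; rfl

theorem gen_mul_x_pow (y : Option (R ⊕ J)) {k n : ℕ} (h : k < n) (a : ℕ) :
    gen y n * x k ^ a = x k ^ a * gen y (n + a) := by
  induction a with
  | zero => simp
  | succ a ih =>
    rw [pow_succ, ← mul_assoc, ih, mul_assoc, gen_mul_x y (by lia), mul_assoc, add_assoc]

theorem xWord_mul_x {l : List ℕ} {j : ℕ} (h : ∀ i ∈ l, j < i) :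
    xWord l * x j = (x j * xWord (l.map (· + 1)) : LabelledThompson R J) := by
  induction l with
  | nil => simp
  | cons i l ih =>
    obtain ⟨hi, hl⟩ := List.forall_mem_cons.1 h
    rw [xWord_cons, mul_assoc, ih hl, ← mul_assoc, gen_mul_x none hi, List.map_cons, xWord_cons,
      mul_assoc]

theorem exists_xWord_eq_pow_mul {m : ℕ} {l : List ℕ} (h : ∀ j ∈ l, m ≤ j) :
    ∃ (a : ℕ) (l' : List ℕ), (∀ j ∈ l', m + 1 ≤ j) ∧
      (xWord l : LabelledThompson R J) = x m ^ a * xWord l' ∧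
      l.length = a + l'.length ∧ (m ∈ l → 0 < a) := by
  induction l with
  | nil => exact ⟨0, [], by simp, by simp, by simp, by simp⟩
  | cons j l ih =>
    obtain ⟨hj, hl⟩ := List.forall_mem_cons.1 h
    obtain ⟨a, l', hl', hprod, hlen, hpos⟩ := ih hl
    rcases hj.eq_or_lt with rfl | hj
    · refine ⟨a + 1, l', hl', ?_, by simp [hlen]; lia, by simp⟩
      rw [xWord_cons, hprod, pow_succ', mul_assoc]
    · refine ⟨a, (j + a) :: l', List.forall_mem_cons.2 ⟨by lia, hl'⟩, ?_, by simp [hlen]; lia,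
        fun hm => hpos ((List.mem_cons.1 hm).resolve_left hj.ne)⟩
      rw [xWord_cons, xWord_cons, hprod, ← mul_assoc, gen_mul_x_pow none hj, mul_assoc]

theorem le_stretch_pow (m a : ℕ) (t : ℝ) : t ≤ (stretch m ^ a) t := by
  induction a generalizing t with
  | zero => exact le_rfl
  | succ a ih =>
    rw [pow_succ, RelIso.mul_apply]
    exact (le_stretch m t).trans (ih _)

/- Both sides are evaluated at `m + 1 / 2`, which `stretch m` moves to `m + 1`. -/
theorem exponent_le_of_stretchWord_mul_pow_eq {m a b : ℕ} {l l' : List ℕ}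
    (h : ∀ j ∈ l, m + 1 ≤ j)
    (heq : stretchWord l * stretch m ^ a = stretchWord l' * stretch m ^ b) : b ≤ a := by
  by_contra! hlt
  obtain ⟨d, rfl⟩ : ∃ d, b = d + 1 + a := ⟨b - a - 1, by lia⟩
  rw [pow_add, ← mul_assoc, mul_left_inj] at heq
  have heval := DFunLike.congr_fun heq (m + 1 / 2 : ℝ)
  rw [stretchWord_of_le h (by push_cast; linarith), pow_succ, RelIso.mul_apply,
    RelIso.mul_apply, stretch_midpoint] at heval
  linarith [le_stretch_pow m d (m + 1), le_stretchWord l' ((stretch m ^ d) (m + 1))]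

theorem xWord_eq_of_stretchWord_eq {l l' : List ℕ} (h : stretchWord l = stretchWord l') :
    (xWord l : LabelledThompson R J) = xWord l' := by
  induction hN : l.length + l'.length using Nat.strong_induction_on generalizing l l' with
  | _ N ih =>
  subst hN
  rcases eq_or_ne (l ++ l') [] with hnil | hne
  · rw [(List.append_eq_nil_iff.1 hnil).1, (List.append_eq_nil_iff.1 hnil).2]
  classical
  have hex : ∃ m, m ∈ l ++ l' := List.exists_mem_of_ne_nil _ hne
  set m := Nat.find hex
  have hmin (j : ℕ) (hj : j ∈ l ++ l') : m ≤ j := Nat.find_min' hex hj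
  obtain ⟨a, l₁, hl₁, hprod, hlen, hpos⟩ := exists_xWord_eq_pow_mul (R := R) (J := J)
    fun j hj => hmin j (List.mem_append_left l' hj)
  obtain ⟨b, l₂, hl₂, hprod', hlen', hpos'⟩ := exists_xWord_eq_pow_mul (R := R) (J := J)
    fun j hj => hmin j (List.mem_append_right l hj)
  have hact (l : List ℕ) (c : ℕ) :
      toHomeo (x m ^ c * xWord l : LabelledThompson R J) = (stretchWord l * stretch m ^ c)⁻¹ := by
    rw [map_mul, map_pow, toHomeo_x, toHomeo_xWord, mul_inv_rev, inv_pow]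
  have heq : stretchWord l₁ * stretch m ^ a = stretchWord l₂ * stretch m ^ b := by
    rw [← inv_inj, ← hact, ← hact, ← hprod, ← hprod', toHomeo_xWord, toHomeo_xWord, h]
  obtain rfl : a = b := le_antisymm (exponent_le_of_stretchWord_mul_pow_eq hl₂ heq.symm)
    (exponent_le_of_stretchWord_mul_pow_eq hl₁ heq)
  have ha : 0 < a := (List.mem_append.1 (Nat.find_spec hex)).elim hpos hpos'
  rw [hprod, hprod', ih _ (by lia) (mul_right_cancel heq) rfl]

end Words

section Fractions

theorem exists_inv_x_mul_x (k n : ℕ) : ∃ l l' : List ℕ, l.length ≤ 1 ∧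
    (x k)⁻¹ * x n = (xWord l * (xWord l')⁻¹ : LabelledThompson R J) := by
  rcases lt_trichotomy k n with h | rfl | h
  · refine ⟨[n + 1], [k], le_rfl, ?_⟩
    rw [inv_mul_eq_iff_eq_mul, ← mul_assoc, eq_mul_inv_iff_mul_eq]
    simpa using gen_mul_x none h
  · exact ⟨[], [], zero_le_one, by simp⟩
  · refine ⟨[n], [k + 1], le_rfl, ?_⟩
    rw [inv_mul_eq_iff_eq_mul, ← mul_assoc, eq_mul_inv_iff_mul_eq]
    simpa using (gen_mul_x none h).symm

/- The bound on the length of `l₁` keeps the induction going. -/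
theorem exists_inv_xWord_mul_x (l : List ℕ) (n : ℕ) : ∃ l₁ l₂ : List ℕ, l₁.length ≤ 1 ∧
    (xWord l)⁻¹ * x n = (xWord l₁ * (xWord l₂)⁻¹ : LabelledThompson R J) := by
  induction l generalizing n with
  | nil => exact ⟨[n], [], le_rfl, by simp⟩
  | cons k l ih =>
    obtain ⟨l₁, l₂, hlen, hx⟩ := exists_inv_x_mul_x (R := R) (J := J) k n
    rw [xWord_cons, mul_inv_rev, mul_assoc, hx]
    match l₁, hlen with
    | [], _ => exact ⟨[], l₂ ++ l, zero_le_one, by simp [xWord_append]⟩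
    | [i], _ =>
      obtain ⟨l₃, l₄, hlen', hi⟩ := ih i
      refine ⟨l₃, l₂ ++ l₄, hlen', ?_⟩
      rw [xWord_cons, xWord_nil, mul_one, ← mul_assoc, hi, xWord_append, mul_inv_rev, mul_assoc]

theorem exists_eq_xWord_mul_inv {f : LabelledThompson R J} (hf : f ∈ thompson R J) :
    ∃ l l' : List ℕ, f = xWord l * (xWord l')⁻¹ := by
  induction hf using Subgroup.closure_induction_right with
  | one => exact ⟨[], [], by simp⟩
  | mul_right _ _ _ hy ih =>
    obtain ⟨n, rfl⟩ := hy
    obtain ⟨l, l', rfl⟩ := ih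
    obtain ⟨l₁, l₂, -, hn⟩ := exists_inv_xWord_mul_x (R := R) (J := J) l' n
    exact ⟨l ++ l₁, l₂, by rw [mul_assoc, hn, xWord_append, mul_assoc]⟩
  | mul_inv_cancel _ _ _ hy ih =>
    obtain ⟨n, rfl⟩ := hy
    obtain ⟨l, l', rfl⟩ := ih
    exact ⟨l, n :: l', by rw [xWord_cons, mul_inv_rev, mul_assoc]⟩

theorem exists_common_denominator {f g : LabelledThompson R J} (hf : f ∈ thompson R J)
    (hg : g ∈ thompson R J) :
    ∃ (h : LabelledThompson R J) (l l' : List ℕ), f = h * (xWord l)⁻¹ ∧ g = h * (xWord l')⁻¹ := by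
  obtain ⟨l, l', hfg⟩ := exists_eq_xWord_mul_inv (mul_mem (inv_mem hf) hg)
  exact ⟨f * xWord l, l, l', by group, by rw [mul_assoc, ← hfg, mul_inv_cancel_left]⟩

theorem injective_toHomeo_thompson :
    Function.Injective (toHomeo.comp (thompson R J).subtype) := by
  refine (injective_iff_map_eq_one _).2 fun ⟨f, hf⟩ hone => Subtype.ext ?_
  obtain ⟨l, l', rfl⟩ := exists_eq_xWord_mul_inv hf
  rw [MonoidHom.comp_apply, Subgroup.coe_subtype, map_mul, map_inv, toHomeo_xWord, toHomeo_xWord,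
    inv_inv, inv_mul_eq_one] at hone
  exact mul_inv_eq_one.2 (xWord_eq_of_stretchWord_eq hone)

theorem exists_isBiCone_thompson : ∃ Q : Set (thompson R J), IsBiCone Q :=
  ⟨_, isBiCone_rightAffine.preimage
    (f := (toHomeo.comp (thompson R J).subtype).codRestrict rightAffine
      fun f => thompson_le_comap_rightAffine f.2)
    fun _ _ h => injective_toHomeo_thompson (congrArg Subtype.val h)⟩

end Fractions

/-! ### Conjugates of the generators -/

section TreeWords

/-- The words along which a binary tree grows from the leaf at position `m`: the `i`-th letter
splits one of the `i + 1` leaves grown so far. -/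
inductive IsTreeWord (m : ℕ) : List ℕ → Prop
  | nil : IsTreeWord m []
  | snoc {v : List ℕ} {j : ℕ} (hv : IsTreeWord m v) (hmj : m ≤ j) (hj : j ≤ m + v.length) :
      IsTreeWord m (v ++ [j])

namespace IsTreeWord

variable {m : ℕ} {v : List ℕ}

theorem le_of_mem (h : IsTreeWord m v) : ∀ j ∈ v, m ≤ j := by
  induction h with
  | nil => simp
  | snoc _ hmj _ ih => exact List.forall_mem_append.2 ⟨ih, by simpa⟩

theorem map_succ (h : IsTreeWord m v) : IsTreeWord (m + 1) (v.map (· + 1)) := by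
  induction h with
  | nil => exact nil
  | snoc _ hmj hj ih =>
    rw [List.map_append]
    exact ih.snoc (by simpa using hmj) (by rw [List.length_map]; lia)

theorem gen_mul_xWord (h : IsTreeWord m v) (y : Option (R ⊕ J)) {n : ℕ} (hn : m + 1 ≤ n) :
    gen y n * xWord v = xWord v * gen y (n + v.length) := by
  induction h with
  | nil => simp
  | snoc _ _ hj ih =>
    rw [xWord_append_singleton, ← mul_assoc, ih, mul_assoc, gen_mul_x y (by lia), ← mul_assoc,
      List.length_append, List.length_singleton, add_assoc]

theorem stretchWord_of_ge (h : IsTreeWord m v) {t : ℝ} (ht : (m : ℝ) + 1 ≤ t) :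
    stretchWord v t = t + v.length := by
  induction h with
  | nil => simp [stretchWord]
  | @snoc v j _ _ hj ih =>
    have hj' : (j : ℝ) ≤ m + v.length := by exact_mod_cast hj
    rw [stretchWord_append_singleton, RelIso.mul_apply, ih, VirtualThompson.stretch_of_ge
      (by linarith), List.length_append, List.length_singleton, Nat.cast_add, Nat.cast_one,
      add_assoc]

end IsTreeWord

end TreeWords

section Windows

/-- The support of the generator labelled `y` of index `k`, recorded as a parametrization: it is
`[k, k + 1]` for a label in `R` and `[k, ∞)` for a label in `J`. -/
noncomputable def window : R ⊕ J → ℕ → ℝ → ℝ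
  | .inl _, k, t => k + max 0 (min t 1)
  | .inr _, k, t => k + max 0 t

theorem le_window (y : R ⊕ J) (k : ℕ) (t : ℝ) : k ≤ window y k t := by
  cases y <;> simp [window]

theorem window_inl_le (r : R) (k : ℕ) (t : ℝ) : window (.inl r : R ⊕ J) k t ≤ k + 1 := by
  simp [window]

theorem window_zero (y : R ⊕ J) (k : ℕ) : window y k 0 = k := by
  cases y <;> simp [window]

theorem window_inl_one (r : R) (k : ℕ) : window (.inl r : R ⊕ J) k 1 = k + 1 := by
  simp [window]

theorem window_inl_sub (r : R) {k : ℕ} {t : ℝ} (h : k ≤ t) (h' : t ≤ k + 1) :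
    window (.inl r : R ⊕ J) k (t - k) = t := by
  rw [window, min_eq_left (by linarith), max_eq_right (by linarith), add_sub_cancel]

theorem window_inr_sub (j : J) {k : ℕ} {t : ℝ} (h : k ≤ t) :
    window (.inr j : R ⊕ J) k (t - k) = t := by
  rw [window, max_eq_right (by linarith), add_sub_cancel]

theorem window_succ (y : R ⊕ J) (k : ℕ) (t : ℝ) : window y (k + 1) t = window y k t + 1 := by
  cases y <;> simp [window] <;> ring

theorem stretch_comp_window (y : R ⊕ J) {k n : ℕ} (h : k < n) :
    stretch k ∘ window y n = window y (n + 1) := by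
  ext t
  have hn : (k : ℝ) + 1 ≤ n := by exact_mod_cast h
  rw [window_succ, Function.comp_apply, stretch_of_ge (hn.trans (le_window y n t))]

theorem stretch_comp_window_inl (r : R) {k n : ℕ} (h : k < n) :
    stretch n ∘ window (.inl r : R ⊕ J) k = window (.inl r : R ⊕ J) k := by
  ext t
  have hn : (k : ℝ) + 1 ≤ n := by exact_mod_cast h
  exact stretch_of_le ((window_inl_le r k t).trans hn)

end Windows

section Letters

theorem conj_inv_x_gen (y : Option (R ⊕ J)) {k n : ℕ} (h : k < n) :
    MulAut.conj (x k)⁻¹ (gen y n) = gen y (n + 1) := by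
  rw [map_inv, MulAut.conj_inv_apply, mul_assoc, gen_mul_x y h, inv_mul_cancel_left]

theorem conj_inv_x_gen_inl (r : R) {k n : ℕ} (h : k < n) :
    MulAut.conj (x n)⁻¹ (gen (some (.inl r) : Option (R ⊕ J)) k) = gen (some (.inl r)) k := by
  rw [map_inv, MulAut.conj_inv_apply, mul_assoc, ← (commute_gen none r h).eq,
    inv_mul_cancel_left]

/-- The conjugate by `(xWord p)⁻¹` of the labelled generator `(y, k)`, together with its window. -/
noncomputable def conjGen (y : R ⊕ J) (k : ℕ) (p : List ℕ) : LabelledThompson R J × (ℝ → ℝ) :=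
  (MulAut.conj (xWord p)⁻¹ (gen (some y) k), stretchWord p ∘ window y k)

theorem conjGen_append_singleton (y : R ⊕ J) (k : ℕ) (p : List ℕ) (j : ℕ) :
    conjGen y k (p ++ [j]) =
      Prod.map (MulAut.conj (x j)⁻¹) (stretch j ∘ ·) (conjGen y k p) := by
  rw [conjGen, xWord_append_singleton, stretchWord_append_singleton, mul_inv_rev, map_mul]
  rfl

theorem conjGen_append_singleton_of_lt (y : R ⊕ J) {m j : ℕ} {v : List ℕ}
    (hv : ∀ i ∈ v, m ≤ i) (hj : j < m) :
    conjGen y m (v ++ [j]) = conjGen y (m + 1) (v.map (· + 1)) := by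
  ext1
  · simp only [conjGen]
    rw [xWord_append_singleton, xWord_mul_x fun i hi => hj.trans_le (hv i hi), mul_inv_rev,
      map_mul, MulAut.mul_apply, conj_inv_x_gen _ hj]
  · funext t
    have hj' : (j : ℝ) + 1 ≤ m := by exact_mod_cast hj
    simp only [conjGen, Function.comp_apply]
    rw [stretchWord_append_singleton, RelIso.mul_apply, window_succ, stretchWord_map_succ,
      stretch_of_ge (hj'.trans ((le_window y m t).trans (le_stretchWord v _)))]

theorem conjGen_inl_append_singleton_of_lt (r : R) {m j : ℕ} {v : List ℕ} (hv : IsTreeWord m v)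
    (hj : m + v.length < j) :
    conjGen (.inl r : R ⊕ J) m (v ++ [j]) = conjGen (.inl r) m v := by
  ext1
  · obtain ⟨n, rfl⟩ : ∃ n, j = n + v.length := ⟨j - v.length, by lia⟩
    simp only [conjGen]
    rw [xWord_append_singleton, ← hv.gen_mul_xWord none (by lia), mul_inv_rev, map_mul,
      MulAut.mul_apply, conj_inv_x_gen_inl r (by lia)]
  · funext t
    have hle := (stretchWord v).monotone (window_inl_le (J := J) r m t)
    have hj' : (m : ℝ) + 1 + v.length ≤ j := by exact_mod_cast (by lia : m + 1 + v.length ≤ j)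
    simp only [conjGen, Function.comp_apply]
    rw [stretchWord_append_singleton, RelIso.mul_apply, stretch_of_le]
    exact hle.trans (hv.stretchWord_of_ge le_rfl ▸ hj')

/-- The words `v` for which `conjGen y m v` is in normal form: the letters of `v` are those that
split a leaf grown from the support of the generator `(y, m)`. -/
def IsNormalWord : R ⊕ J → ℕ → List ℕ → Prop
  | .inl _, m, v => IsTreeWord m v
  | .inr _, m, v => ∀ j ∈ v, m ≤ j

theorem IsNormalWord.le_of_mem {y : R ⊕ J} {m : ℕ} {v : List ℕ} (h : IsNormalWord y m v) :
    ∀ j ∈ v, m ≤ j := by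
  cases y with
  | inl r => exact IsTreeWord.le_of_mem h
  | inr j => exact h

theorem isNormalWord_nil (y : R ⊕ J) (m : ℕ) : IsNormalWord y m [] := by
  cases y with
  | inl r => exact .nil
  | inr j => exact List.forall_mem_nil _

theorem IsNormalWord.map_succ {y : R ⊕ J} {m : ℕ} {v : List ℕ} (h : IsNormalWord y m v) :
    IsNormalWord y (m + 1) (v.map (· + 1)) := by
  cases y with
  | inl r => exact IsTreeWord.map_succ h
  | inr j => simpa [IsNormalWord] using h

theorem IsNormalWord.exists_conjGen_append_singleton {y : R ⊕ J} {m : ℕ} {v : List ℕ}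
    (h : IsNormalWord y m v) (j : ℕ) :
    ∃ m' v', IsNormalWord y m' v' ∧ conjGen y m (v ++ [j]) = conjGen y m' v' := by
  rcases lt_or_ge j m with hj | hj
  · exact ⟨m + 1, _, h.map_succ, conjGen_append_singleton_of_lt y h.le_of_mem hj⟩
  cases y with
  | inr i => exact ⟨m, v ++ [j], List.forall_mem_append.2 ⟨h, by simpa⟩, rfl⟩
  | inl r =>
    rcases le_or_gt j (m + v.length) with hj' | hj'
    · exact ⟨m, v ++ [j], IsTreeWord.snoc h hj hj', rfl⟩
    · exact ⟨m, v, h, conjGen_inl_append_singleton_of_lt r h hj'⟩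

theorem exists_conjGen_eq_isNormalWord (y : R ⊕ J) (k : ℕ) (p : List ℕ) :
    ∃ m v, IsNormalWord y m v ∧ conjGen y k p = conjGen y m v := by
  induction p using List.reverseRecOn with
  | nil => exact ⟨k, [], isNormalWord_nil y k, rfl⟩
  | append_singleton p j ih =>
    obtain ⟨m, v, hv, hp⟩ := ih
    obtain ⟨m', v', hv', hj⟩ := hv.exists_conjGen_append_singleton j
    exact ⟨m', v', hv', by rw [conjGen_append_singleton, hp, ← conjGen_append_singleton, hj]⟩

theorem IsNormalWord.conjGen_snd_zero {y : R ⊕ J} {m : ℕ} {v : List ℕ} (h : IsNormalWord y m v) :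
    (conjGen y m v).2 0 = m := by
  simp only [conjGen, Function.comp_apply]
  rw [window_zero, stretchWord_of_le h.le_of_mem le_rfl]

theorem IsNormalWord.stretchWord_eq {y : R ⊕ J} {m : ℕ} {v v' : List ℕ} (h : IsNormalWord y m v)
    (h' : IsNormalWord y m v') (heq : (conjGen y m v).2 = (conjGen y m v').2) :
    stretchWord v = stretchWord v' := by
  ext t
  have hw {s : ℝ} (hs : window y m s = t) : stretchWord v t = stretchWord v' t := by
    simpa only [conjGen, Function.comp_apply, hs] using congrFun heq s
  rcases le_total t m with ht | ht
  · rw [stretchWord_of_le h.le_of_mem ht, stretchWord_of_le h'.le_of_mem ht]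
  cases y with
  | inr j => exact hw (window_inr_sub j ht)
  | inl r =>
    rcases le_total t (m + 1) with ht' | ht'
    · exact hw (window_inl_sub r ht ht')
    · have hlen : stretchWord v (m + 1) = stretchWord v' (m + 1) := by
        simpa only [conjGen, Function.comp_apply, window_inl_one] using congrFun heq 1
      rw [IsTreeWord.stretchWord_of_ge h le_rfl, IsTreeWord.stretchWord_of_ge h' le_rfl,
        add_right_inj] at hlen
      rw [IsTreeWord.stretchWord_of_ge h ht', IsTreeWord.stretchWord_of_ge h' ht', hlen]

theorem IsNormalWord.conjGen_fst_eq {y : R ⊕ J} {m m' : ℕ} {v v' : List ℕ}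
    (h : IsNormalWord y m v) (h' : IsNormalWord y m' v')
    (heq : (conjGen y m v).2 = (conjGen y m' v').2) :
    (conjGen y m v).1 = (conjGen y m' v').1 := by
  obtain rfl : m = m' := by
    exact_mod_cast h.conjGen_snd_zero.symm.trans (heq ▸ h'.conjGen_snd_zero)
  simp only [conjGen, xWord_eq_of_stretchWord_eq (R := R) (J := J) (h.stretchWord_eq h' heq)]

theorem IsTreeWord.commute_conjGen_gen {m : ℕ} {v : List ℕ} (h : IsTreeWord m v) (r : R)
    (z : Option (R ⊕ J)) {n : ℕ} (hn : m + v.length < n) :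
    Commute (conjGen (.inl r) m v).1 (gen z n) := by
  obtain ⟨i, rfl⟩ : ∃ i, n = i + v.length := ⟨n - v.length, by lia⟩
  have hgen : gen z (i + v.length) = MulAut.conj (xWord v)⁻¹ (gen z i) := by
    rw [map_inv, MulAut.conj_inv_apply, mul_assoc, h.gen_mul_xWord z (by lia), inv_mul_cancel_left]
  rw [hgen]
  exact (commute_gen z r (by lia)).symm.map (MulAut.conj (xWord v)⁻¹)

theorem IsNormalWord.commute_conjGen {y y' : R ⊕ J} {m m' : ℕ} {v v' : List ℕ}
    (h : IsNormalWord y m v) (h' : IsNormalWord y' m' v')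
    (hle : ∀ s t, (conjGen y m v).2 s ≤ (conjGen y' m' v').2 t) :
    Commute (conjGen y m v).1 (conjGen y' m' v').1 := by
  have hm (s : ℝ) : stretchWord v (window y m s) ≤ m' := (hle s 0).trans h'.conjGen_snd_zero.le
  cases y with
  | inr j =>
    have hle' := (le_stretchWord v _).trans (hm (m' + 1 - m))
    linarith [le_max_right (0 : ℝ) (m' + 1 - m), show m + max 0 ((m' : ℝ) + 1 - m) ≤ m' from hle']
  | inl r =>
    have hm1 := hm 1
    rw [window_inl_one, IsTreeWord.stretchWord_of_ge h le_rfl] at hm1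
    have hlen : m + 1 + v.length ≤ m' := by exact_mod_cast hm1
    have hgen (z : Option (R ⊕ J)) {n : ℕ} (hn : m' ≤ n) :
        Commute (conjGen (.inl r) m v).1 (gen z n) :=
      IsTreeWord.commute_conjGen_gen h r z (by lia)
    have hword : Commute (conjGen (.inl r) m v).1 (xWord v') :=
      Commute.list_prod_right _ _ <| List.forall_mem_map.2 fun j hj => hgen none (h'.le_of_mem j hj)
    have hconj : (conjGen y' m' v').1 = (xWord v')⁻¹ * gen (some y') m' * xWord v' := by
      rw [conjGen, map_inv, MulAut.conj_inv_apply]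
    rw [hconj]
    exact (hword.inv_right.mul_right (hgen _ le_rfl)).mul_right hword

end Letters

section Conj

theorem exists_conj_gen_eq {f g : LabelledThompson R J} (hf : f ∈ thompson R J)
    (hg : g ∈ thompson R J) (y y' : R ⊕ J) (k k' : ℕ) :
    ∃ (h : LabelledThompson R J) (m m' : ℕ) (v v' : List ℕ),
      IsNormalWord y m v ∧ IsNormalWord y' m' v' ∧
      MulAut.conj f (gen (some y) k) = MulAut.conj h (conjGen y m v).1 ∧
      MulAut.conj g (gen (some y') k') = MulAut.conj h (conjGen y' m' v').1 ∧
      toHomeo f ∘ window y k = toHomeo h ∘ (conjGen y m v).2 ∧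
      toHomeo g ∘ window y' k' = toHomeo h ∘ (conjGen y' m' v').2 := by
  obtain ⟨h, l, l', rfl, rfl⟩ := exists_common_denominator hf hg
  obtain ⟨m, v, hv, hl⟩ := exists_conjGen_eq_isNormalWord y k l
  obtain ⟨m', v', hv', hl'⟩ := exists_conjGen_eq_isNormalWord y' k' l'
  refine ⟨h, m, m', v, v', hv, hv', ?_, ?_, ?_, ?_⟩
  · rw [← hl, map_mul]; rfl
  · rw [← hl', map_mul]; rfl
  · rw [← hl, map_mul, map_inv, toHomeo_xWord, inv_inv]; rfl
  · rw [← hl', map_mul, map_inv, toHomeo_xWord, inv_inv]; rfl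

theorem conj_gen_eq_of_window_eq {f g : LabelledThompson R J} (hf : f ∈ thompson R J)
    (hg : g ∈ thompson R J) {y : R ⊕ J} {k k' : ℕ}
    (heq : toHomeo f ∘ window y k = toHomeo g ∘ window y k') :
    MulAut.conj f (gen (some y) k) = MulAut.conj g (gen (some y) k') := by
  obtain ⟨h, m, m', v, v', hv, hv', hf, hg, hwf, hwg⟩ := exists_conj_gen_eq hf hg y y k k'
  rw [hwf, hwg] at heq
  rw [hf, hg, hv.conjGen_fst_eq hv' ((toHomeo h).injective.comp_left heq)]

theorem commute_conj_gen_of_window_le {f g : LabelledThompson R J} (hf : f ∈ thompson R J)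
    (hg : g ∈ thompson R J) {y y' : R ⊕ J} {k k' : ℕ}
    (hle : ∀ s t, toHomeo f (window y k s) ≤ toHomeo g (window y' k' t)) :
    Commute (MulAut.conj f (gen (some y) k)) (MulAut.conj g (gen (some y') k')) := by
  obtain ⟨h, m, m', v, v', hv, hv', hf, hg, hwf, hwg⟩ := exists_conj_gen_eq hf hg y y' k k'
  rw [hf, hg]
  refine (hv.commute_conjGen hv' fun s t => ?_).map (MulAut.conj h)
  have hst := hle s t
  rwa [show toHomeo f (window y k s) = _ from congrFun hwf s,
    show toHomeo g (window y' k' t) = _ from congrFun hwg t, Function.comp_apply,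
    Function.comp_apply, OrderIso.le_iff_le] at hst

end Conj

end LabelledThompson

/-! ### Bi-ordering labelled Thompson groups -/

section OrderOnFunctions

theorem exists_linearOrder_strictMono_comp (α ι : Type*) :
    ∃ _ : LinearOrder (α × (ι → ℝ)), ∀ σ : ℝ ≃o ℝ,
      StrictMono (Prod.map id (σ ∘ ·) : α × (ι → ℝ) → α × (ι → ℝ)) := by
  obtain ⟨_, _⟩ := exists_wellFoundedLT ι
  obtain ⟨_, _⟩ := exists_wellFoundedLT α
  let toLexProd (a : α × (ι → ℝ)) : α ×ₗ Lex (ι → ℝ) := toLex (a.1, toLex a.2)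
  refine ⟨LinearOrder.lift' toLexProd fun _ _ h => h, fun σ a b hab => ?_⟩
  change toLexProd _ < toLexProd _ at hab ⊢
  rw [Prod.Lex.lt_iff] at hab ⊢
  exact hab.imp id fun ⟨hfst, i, heq, hlt⟩ =>
    ⟨hfst, i, fun j hj => congrArg σ (heq j hj), σ.lt_iff_lt.2 hlt⟩

end OrderOnFunctions

namespace LabelledThompson

variable {R J : Type*}

section Embedding

variable (R J) in
/-- The images of the windows of the labelled generators under Thompson's group. They index the
conjugates of the labelled generators by elements of Thompson's group. -/
abbrev PlacedLabel :=
  {a : (R ⊕ J) × (ℝ → ℝ) // ∃ (f : thompson R J) (k : ℕ),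
    a.2 = toHomeo (f : LabelledThompson R J) ∘ window a.1 k}

variable (R J) in
/-- The window of the first label lies to the left of that of the second one. -/
def LeftOf (a b : PlacedLabel R J) : Prop :=
  ∀ s t, a.1.2 s ≤ b.1.2 t

/-- The label `y` placed at the window of the generator of index `k`. -/
noncomputable def place (y : R ⊕ J) (k : ℕ) : PlacedLabel R J :=
  ⟨(y, window y k), 1, k, by simp⟩

theorem PlacedLabel.exists_comp_eq (f : thompson R J) (a : PlacedLabel R J) :
    ∃ (g : thompson R J) (k : ℕ), toHomeo (f : LabelledThompson R J) ∘ a.1.2 =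
      toHomeo (g : LabelledThompson R J) ∘ window a.1.1 k := by
  obtain ⟨g, k, ha⟩ := a.2
  exact ⟨f * g, k, by rw [ha, Subgroup.coe_mul, map_mul]; rfl⟩

variable (R J) in
/-- Thompson's group acts on the placed labels by moving their windows. -/
noncomputable def movePlaced : thompson R J →* (LeftOf R J ≃r LeftOf R J) where
  toFun f :=
    { toFun := fun a => ⟨(a.1.1, toHomeo (f : LabelledThompson R J) ∘ a.1.2), a.exists_comp_eq f⟩
      invFun := fun a =>
        ⟨(a.1.1, toHomeo (f⁻¹ : LabelledThompson R J) ∘ a.1.2), a.exists_comp_eq f⁻¹⟩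
      left_inv := fun a => by ext <;> simp
      right_inv := fun a => by ext <;> simp
      map_rel_iff' := by simp [LeftOf] }
  map_one' := by ext <;> simp
  map_mul' f g := by ext <;> simp

theorem movePlaced_inv_x_place (y : R ⊕ J) {k n : ℕ} (h : k < n) :
    movePlaced R J ⟨x k, x_mem_thompson k⟩⁻¹ (place y n) = place y (n + 1) :=
  Subtype.ext <| Prod.ext rfl <| by
    simp [movePlaced, place, stretch_comp_window y h]

theorem movePlaced_inv_x_place_inl (r : R) {k n : ℕ} (h : k < n) :
    movePlaced R J ⟨x n, x_mem_thompson n⟩⁻¹ (place (.inl r) k) = place (.inl r) k :=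
  Subtype.ext <| Prod.ext rfl <| by
    simp [movePlaced, place, stretch_comp_window_inl r h]

theorem leftOf_place (y : R ⊕ J) (r : R) {k n : ℕ} (h : k < n) :
    LeftOf R J (place (.inl r) k) (place y n) := fun s t =>
  calc window (.inl r : R ⊕ J) k s ≤ k + 1 := window_inl_le r k s
    _ ≤ n := by exact_mod_cast h
    _ ≤ window y n t := le_window y n t

variable (R J) in
/-- The right-angled Artin group on the placed labels, extended by Thompson's group. -/
abbrev LabelledRAAG :=
  RAAG (LeftOf R J) ⋊[(RAAG.aut (LeftOf R J)).comp (movePlaced R J)] thompson R J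

open SemidirectProduct in
theorem inl_of_mul_inr (a : PlacedLabel R J) (f : thompson R J) :
    (inl (.of (LeftOf R J) a) * inr f : LabelledRAAG R J) =
      inr f * inl (.of (LeftOf R J) (movePlaced R J f⁻¹ a)) := by
  rw [← RAAG.aut_of, ← MonoidHom.comp_apply, inl_aut, inv_inv, mul_assoc, map_inv,
    mul_inv_cancel_left]

open SemidirectProduct in
/-- The homomorphism that sends the labelled generator `(y, n)` to the placed label
`place y n`. -/
noncomputable def toLabelledRAAG : LabelledThompson R J →* LabelledRAAG R J :=
  lift
    (fun y n => y.elim (inr ⟨x n, x_mem_thompson n⟩) fun y => inl (.of (LeftOf R J) (place y n)))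
    (by
      rintro (_ | y) n k hk
      · simp only [Option.elim, ← map_mul]
        exact congrArg inr (Subtype.ext (gen_mul_x none hk))
      · simp only [Option.elim, inl_of_mul_inr, movePlaced_inv_x_place y hk])
    (by
      rintro (_ | y) r n k hk
      · refine Eq.symm ?_
        simp only [Option.elim, inl_of_mul_inr, movePlaced_inv_x_place_inl r hk]
      · exact (RAAG.commute_of (leftOf_place y r hk)).symm.map inl)

/-- The conjugate of a labelled generator indexed by a placed label. -/
noncomputable def PlacedLabel.toConj (a : PlacedLabel R J) : LabelledThompson R J :=
  MulAut.conj (a.2.choose : LabelledThompson R J) (gen (some a.1.1) a.2.choose_spec.choose)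

theorem PlacedLabel.toConj_eq {a : PlacedLabel R J} (f : thompson R J) {k : ℕ}
    (ha : a.1.2 = toHomeo (f : LabelledThompson R J) ∘ window a.1.1 k) :
    a.toConj = MulAut.conj (f : LabelledThompson R J) (gen (some a.1.1) k) :=
  conj_gen_eq_of_window_eq a.2.choose.2 f.2 (a.2.choose_spec.choose_spec.symm.trans ha)

theorem PlacedLabel.toConj_place (y : R ⊕ J) (k : ℕ) : (place y k).toConj = gen (some y) k := by
  rw [toConj_eq 1 (k := k) (by simp [place])]
  simp [place]

theorem PlacedLabel.toConj_movePlaced (f : thompson R J) (a : PlacedLabel R J) :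
    (movePlaced R J f a).toConj = MulAut.conj (f : LabelledThompson R J) a.toConj := by
  obtain ⟨g, k, ha⟩ := a.2
  rw [toConj_eq (f * g) (k := k) (by simp [movePlaced, ha, Function.comp_assoc]), toConj_eq g ha,
    Subgroup.coe_mul, map_mul, MulAut.mul_apply]
  rfl

theorem PlacedLabel.commute_toConj {a b : PlacedLabel R J} (h : LeftOf R J a b) :
    Commute a.toConj b.toConj := by
  obtain ⟨f, k, ha⟩ := a.2
  obtain ⟨g, l, hb⟩ := b.2
  rw [toConj_eq f ha, toConj_eq g hb]
  refine commute_conj_gen_of_window_le f.2 g.2 fun s t => ?_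
  have hst := h s t
  rwa [ha, hb] at hst

/-- A left inverse of `toLabelledRAAG`. -/
noncomputable def ofLabelledRAAG : LabelledRAAG R J →* LabelledThompson R J :=
  SemidirectProduct.lift (RAAG.lift PlacedLabel.toConj fun _ _ => PlacedLabel.commute_toConj)
    (thompson R J).subtype fun f => RAAG.hom_ext fun a => by
      simp [PlacedLabel.toConj_movePlaced]

theorem ofLabelledRAAG_comp_toLabelledRAAG :
    ofLabelledRAAG.comp toLabelledRAAG = MonoidHom.id (LabelledThompson R J) :=
  hom_ext <| by
    rintro (_ | y) n
    · simp [toLabelledRAAG, ofLabelledRAAG]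
    · simp [toLabelledRAAG, ofLabelledRAAG, PlacedLabel.toConj_place]

theorem toLabelledRAAG_injective : Function.Injective (toLabelledRAAG (R := R) (J := J)) :=
  Function.LeftInverse.injective (g := ofLabelledRAAG)
    (DFunLike.congr_fun ofLabelledRAAG_comp_toLabelledRAAG)

end Embedding

variable (R J) in
theorem exists_isBiCone : ∃ P : Set (LabelledThompson R J), IsBiCone P := by
  obtain ⟨_, hmono⟩ := exists_linearOrder_strictMono_comp (R ⊕ J) ℝ
  obtain ⟨Q, hQ⟩ := exists_isBiCone_thompson (R := R) (J := J)
  obtain ⟨P, hP⟩ := RAAG.exists_isBiCone_semidirectProduct hQ (movePlaced R J)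
    fun f _ _ h => hmono (toHomeo (f : LabelledThompson R J)) h
  exact ⟨_, hP.preimage toLabelledRAAG_injective⟩

end LabelledThompson

/-! ### Families indexed by words -/

section Intertwines

variable {K : Type*} [Group K]

/-- `A` intertwines the families `E` and `E'` of rewriting elements if rewriting a letter `s` to
`t` in the index of `A` amounts to exchanging `A` with `E s t q` and `E' s t q`, where `q` is the
part of the word to the right of `s`. All relations of `VF` have this form. -/
def Intertwines (E E' : Letter → Tgt → Word → K) (A : Word → K) : Prop :=
  ∀ p s t q, A (p ++ [s] ++ q) * E' s t q = E s t q * A (p ++ tw t ++ q)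

namespace Intertwines

variable {E E' E'' : Letter → Tgt → Word → K} {A B : Word → K}

theorem mul (hA : Intertwines E E' A) (hB : Intertwines E' E'' B) :
    Intertwines E E'' fun u => A u * B u := fun p s t q => by
  rw [mul_assoc, hB, ← mul_assoc, hA, mul_assoc]

theorem inv (hA : Intertwines E E' A) : Intertwines E' E fun u => (A u)⁻¹ := fun p s t q => by
  rw [inv_mul_eq_iff_eq_mul, ← mul_assoc, hA, mul_inv_cancel_right]

theorem append (hA : Intertwines E E' A) (w : Word) : Intertwines E E' fun u => A (w ++ u) :=
  fun p s t q => by simpa only [List.append_assoc] using hA (w ++ p) s t q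

theorem congr (hA : Intertwines E E' A) (h : ∀ u, u ≠ [] → A u = B u) : Intertwines E E' B :=
  fun p s t q => by
    rw [← h (p ++ [s] ++ q) (by simp), ← h (p ++ tw t ++ q) (by simp [tw]), hA]

theorem const {g : K} (h : ∀ s t u, g * E' s t u = E s t u * g) :
    Intertwines E E' fun _ => g :=
  fun _ s t q => h s t q

theorem of_eq_one (h : ∀ u, u ≠ [] → A u = 1) : Intertwines E E A :=
  (const (g := 1) (by simp)).congr fun u hu => (h u hu).symm

theorem map {L : Type*} [Group L] (f : K →* L) (hA : Intertwines E E' A) :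
    Intertwines (fun s t u => f (E s t u)) (fun s t u => f (E' s t u)) fun u => f (A u) :=
  fun p s t q => by rw [← map_mul, hA, map_mul]

end Intertwines

end Intertwines

/-! ### Homomorphisms from the virtual Thompson group -/

section Presentation

variable {K : Type*} [Group K]

/-- The generators of `VF`. -/
def vfGen (g : Gen) : VF :=
  PresentedGroup.of g

/-- The first letter in the uniform shape
`X_{src i,s→t,q} X_{i,p t q} = X_{i,p s q} X_{dst i,s→t,q}` of the relations (R3) to (R6). -/
def src : G3 → Letter
  | .xvv | .xvx => .x
  | .vxx | .vxv => .v

/-- The second letter in the uniform shape of the relations (R3) to (R6), see `src`. -/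
def dst : G3 → Letter
  | .xvv | .xvx => .v
  | .vxx | .vxv => .x

/-- The second family of generators under an assignment `F`. -/
def family2 (F : Gen → K) (a s : Letter) (t : Tgt) (u : Word) : K :=
  F (.fam2 a s t u)

/-- The third family of generators under an assignment `F`, with the junk value `1` at the empty
word. -/
def family3 (F : Gen → K) (i : G3) (u : Word) : K :=
  if h : u ≠ [] then F (.fam3 i ⟨u, h⟩) else 1

/-- The assignment `F` of values to the generators satisfies the relations of `VF`. -/
structure SatisfiesVFRels (F : Gen → K) : Prop where
  intertwines_family2 (a s : Letter) (t : Tgt) :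
    Intertwines (family2 F a) (family2 F a) (family2 F a s t)
  intertwines_family3 (i : G3) :
    Intertwines (family2 F (src i)) (family2 F (dst i)) (family3 F i)

theorem vfGen_mul_vfGen {A B C D : Gen} (h : VFRel (X A * X B * (X C * X D)⁻¹)) :
    vfGen A * vfGen B = vfGen C * vfGen D := by
  have hone := PresentedGroup.one_of_mem (rels := VFrels) h
  rwa [map_mul, map_inv, mul_inv_eq_one, map_mul, map_mul] at hone

theorem family3_of_ne_nil (F : Gen → K) (i : G3) {u : Word} (h : u ≠ []) :
    family3 F i u = F (.fam3 i ⟨u, h⟩) :=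
  dif_pos h

theorem satisfiesVFRels_vfGen : SatisfiesVFRels vfGen where
  intertwines_family2 a s₁ t₁ p s₂ t₂ q := vfGen_mul_vfGen (.r12 a s₁ s₂ t₁ t₂ p q)
  intertwines_family3 i p s t q := by
    rw [family3_of_ne_nil _ _ (by simp), family3_of_ne_nil _ _ (by simp [tw])]
    cases i
    · exact (vfGen_mul_vfGen (.r3 s t p q)).symm
    · exact (vfGen_mul_vfGen (.r4 s t p q)).symm
    · exact (vfGen_mul_vfGen (.r5 s t p q)).symm
    · exact (vfGen_mul_vfGen (.r6 s t p q)).symm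

theorem SatisfiesVFRels.map {L : Type*} [Group L] {F : Gen → K} (hF : SatisfiesVFRels F)
    (f : K →* L) : SatisfiesVFRels fun g => f (F g) where
  intertwines_family2 a s t := (hF.intertwines_family2 a s t).map f
  intertwines_family3 i := ((hF.intertwines_family3 i).map f).congr fun u hu => by
    simp only [family3_of_ne_nil _ _ hu]

/-- The universal property of `VF`. -/
def vfLift {F : Gen → K} (hF : SatisfiesVFRels F) : VF →* K :=
  PresentedGroup.toGroup (f := F) <| by
    intro g hg
    have h3 (i : G3) (s : Letter) (t : Tgt) (p q : Word) :
        F (.fam2 (src i) s t q) * F (.fam3 i ⟨p ++ tw t ++ q, by simp [tw]⟩) =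
          F (.fam3 i ⟨p ++ [s] ++ q, by simp⟩) * F (.fam2 (dst i) s t q) := by
      have h := hF.intertwines_family3 i p s t q
      rw [family3_of_ne_nil _ _ (by simp), family3_of_ne_nil _ _ (by simp [tw])] at h
      exact h.symm
    obtain ⟨a, s₁, s₂, t₁, t₂, p, q⟩ | ⟨s, t, p, q⟩ | ⟨s, t, p, q⟩ | ⟨s, t, p, q⟩ | ⟨s, t, p, q⟩ :=
      (hg : VFRel g) <;>
      simp only [map_mul, map_inv, X, FreeGroup.lift_apply_of, mul_inv_eq_one]
    · exact hF.intertwines_family2 a s₁ t₁ p s₂ t₂ q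
    · exact h3 .xvv s t p q
    · exact h3 .xvx s t p q
    · exact h3 .vxx s t p q
    · exact h3 .vxv s t p q

@[simp]
theorem vfLift_vfGen {F : Gen → K} (hF : SatisfiesVFRels F) (g : Gen) :
    vfLift hF (vfGen g) = F g :=
  PresentedGroup.toGroup.of _

theorem vf_hom_ext {f f' : VF →* K} (h : ∀ g, f (vfGen g) = f' (vfGen g)) : f = f' :=
  PresentedGroup.ext h

end Presentation

section HNN

/-- The endomorphism of `VF` that maps `X_{b,s→t,u}` to `X_{a,s→t,u}` for both letters `b`, and the
other generators to `1`. -/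
def switch (a : Letter) : VF →* VF :=
  vfLift (F := fun
    | .fam2 _ s t u => vfGen (.fam2 a s t u)
    | _ => 1)
  { intertwines_family2 := fun _ => satisfiesVFRels_vfGen.intertwines_family2 a
    intertwines_family3 := fun _ =>
      Intertwines.of_eq_one fun _ hu => family3_of_ne_nil _ _ hu }

theorem switch_fam2 (a b s : Letter) (t : Tgt) (u : Word) :
    switch a (vfGen (.fam2 b s t u)) = vfGen (.fam2 a s t u) :=
  vfLift_vfGen _ _

theorem switch_switch (a b : Letter) (g : VF) : switch a (switch b g) = switch a g := by
  suffices h : (switch a).comp (switch b) = switch a from DFunLike.congr_fun h g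
  refine vf_hom_ext fun g => ?_
  rcases g with _ | _ | _ <;> simp [switch]

/-- The isomorphism between the subgroups generated by the `X_{a,s→t,u}` and by the
`X_{b,s→t,u}`. -/
def switchEquiv (a b : Letter) : (switch a).range ≃* (switch b).range where
  toFun g := ⟨switch b g, g, rfl⟩
  invFun g := ⟨switch a g, g, rfl⟩
  left_inv := by
    rintro ⟨_, g, rfl⟩
    simp only [switch_switch]
  right_inv := by
    rintro ⟨_, g, rfl⟩
    simp only [switch_switch]
  map_mul' g h := Subtype.ext (map_mul _ _ _)

theorem exists_injective_forall_semiconjBy :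
    ∃ (K : Type) (_ : Group K) (o : VF →* K) (T : Letter → K), Function.Injective o ∧
      ∀ a s t u, SemiconjBy (T a) (family2 (fun g => o (vfGen g)) .x s t u)
        (family2 (fun g => o (vfGen g)) a s t u) := by
  let φ := switchEquiv .x .v
  refine ⟨HNNExtension VF _ _ φ, inferInstance, HNNExtension.of,
    fun | .x => 1 | .v => HNNExtension.t, HNNExtension.of_injective φ, ?_⟩
  rintro (_ | _) s t u
  · exact SemiconjBy.one_left _
  · have h := HNNExtension.t_mul_of (φ := φ)
      ⟨vfGen (.fam2 .x s t u), vfGen (.fam2 .x s t u), switch_fam2 ..⟩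
    simpa only [SemiconjBy, family2, φ, switchEquiv, MulEquiv.coe_mk, Equiv.coe_fn_mk, switch_fam2]
      using h

end HNN

/-! ### The virtual Thompson group inside a labelled Thompson group -/

section Spell

variable {K L : Type*} [Group K] [Group L]

/-- The product of the `c s n`, where `s` runs through the letters of a word from left to right and
`n` is the number of letters to the right of `s`. -/
def spell (c : Letter → ℕ → K) : Word → K
  | [] => 1
  | s :: u => c s u.length * spell c u

/-- The family interpolating between the words `w ++ u` and `w' ++ u` by the element `Z n`, which
depends only on the length `n` of `u`. -/
def twist (c : Letter → ℕ → K) (Z : ℕ → K) (w w' u : Word) : K :=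
  (spell c (w ++ u))⁻¹ * Z u.length * spell c (w' ++ u)

theorem spell_append (c : Letter → ℕ → K) (w u : Word) :
    spell c (w ++ u) = spell (fun s n => c s (n + u.length)) w * spell c u := by
  induction w with
  | nil => simp [spell]
  | cons s w ih => simp only [List.cons_append, spell, ih, List.length_append, mul_assoc]

theorem spell_mul {c c' : Letter → ℕ → K} {z : K} (h : ∀ s n, c s n * z = z * c' s n) (w : Word) :
    spell c w * z = z * spell c' w := by
  induction w with
  | nil => simp [spell]
  | cons s w ih => rw [spell, spell, mul_assoc, ih, ← mul_assoc, h, mul_assoc]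

theorem map_spell (f : K →* L) (c : Letter → ℕ → K) (w : Word) :
    f (spell c w) = spell (fun s n => f (c s n)) w := by
  induction w with
  | nil => exact map_one f
  | cons s w ih => simp only [spell, map_mul, ih]

theorem map_twist (f : K →* L) (c : Letter → ℕ → K) (Z : ℕ → K) (w w' u : Word) :
    f (twist c Z w w' u) = twist (fun s n => f (c s n)) (fun n => f (Z n)) w w' u := by
  simp only [twist, map_mul, map_inv, map_spell]

variable {c : Letter → ℕ → K} {z : Letter → Tgt → ℕ → K} {Z : ℕ → K}

theorem spell_mul_twist (hc : ∀ a s t {k n}, k < n → c a n * z s t k = z s t k * c a (n + 1))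
    (p : Word) (s : Letter) (t : Tgt) (q : Word) :
    spell c (p ++ ([s] ++ q)) * twist c (z s t) [s] (tw t) q =
      z s t q.length * spell c (p ++ (tw t ++ q)) := by
  have hp : spell (fun a n => c a (n + ([s] ++ q).length)) p * z s t q.length =
      z s t q.length * spell (fun a n => c a (n + (tw t ++ q).length)) p :=
    spell_mul (fun a n => hc a s t (by simp; omega)) p
  rw [spell_append c p, spell_append c p, ← mul_assoc (z s t _), ← hp, twist]
  group

theorem intertwines_twist
    (hc : ∀ a s t {k n}, k < n → c a n * z s t k = z s t k * c a (n + 1))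
    (hZ : ∀ s t {k n}, k < n → Z n * z s t k = z s t k * Z (n + 1)) (w w' : Word) :
    Intertwines (fun s t => twist c (z s t) [s] (tw t)) (fun s t => twist c (z s t) [s] (tw t))
      (twist c Z w w') := by
  intro p s t q
  have hlen : (p ++ tw t ++ q).length = (p ++ [s] ++ q).length + 1 := by simp [tw]; omega
  have hleft := spell_mul_twist hc (w ++ p) s t q
  have hright := spell_mul_twist hc (w' ++ p) s t q
  have hmid := hZ s t (show q.length < (p ++ [s] ++ q).length by simp; omega)
  simp only [List.append_assoc] at hleft hright hmid hlen ⊢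
  set u := p ++ ([s] ++ q)
  set u' := p ++ (tw t ++ q)
  set e := twist c (z s t) [s] (tw t) q
  have hleft_inv : (spell c (w ++ u))⁻¹ * z s t q.length = e * (spell c (w ++ u'))⁻¹ := by
    rw [inv_mul_eq_iff_eq_mul, ← mul_assoc, hleft, mul_inv_cancel_right]
  calc twist c Z w w' u * e
      = (spell c (w ++ u))⁻¹ * Z u.length * (spell c (w' ++ u) * e) := mul_assoc _ _ _
    _ = (spell c (w ++ u))⁻¹ * (Z u.length * z s t q.length) * spell c (w' ++ u') := by
      rw [hright]; simp only [mul_assoc]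
    _ = (spell c (w ++ u))⁻¹ * z s t q.length * Z u'.length * spell c (w' ++ u') := by
      rw [hmid, hlen]; simp only [mul_assoc]
    _ = e * twist c Z w w' u' := by
      rw [hleft_inv, twist]; simp only [mul_assoc]

end Spell

section Embedding

/-- The labels of the generators of the labelled Thompson group containing `VF` that are supported
on half-lines. The `n`-th generator with label `relabel s` replaces `s` by `x` in front of a word of
length `n`, and `base a` conjugates the `X_{x,s→t,u}` to the `X_{a,s→t,u}`. -/
inductive ShiftLabel : Type
  | relabel (s : Letter)
  | base (a : Letter)
  | fam1 (j : G1)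
  | fam3 (i : G3)

/-- The labelled Thompson group containing `VF`. -/
abbrev Ambient : Type :=
  LabelledThompson (Letter × Tgt) ShiftLabel

namespace Ambient

open LabelledThompson

/-- The generators of the ambient group with a label in `ShiftLabel`. -/
abbrev shiftGen (j : ShiftLabel) (n : ℕ) : Ambient :=
  gen (some (.inr j)) n

/-- The element rewriting `s` to `t` in front of the word consisting of `n` letters `x`, after all
letters have been replaced by `x`. -/
def rewriteGen (s : Letter) (t : Tgt) (n : ℕ) : Ambient :=
  gen (some (.inl (s, t))) n * x n

theorem gen_mul_rewriteGen (y : Option ((Letter × Tgt) ⊕ ShiftLabel)) (s : Letter) (t : Tgt)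
    {k n : ℕ} (h : k < n) :
    gen y n * rewriteGen s t k = rewriteGen s t k * gen y (n + 1) := by
  rw [rewriteGen, ← mul_assoc, (commute_gen y (s, t) h).eq, mul_assoc, gen_mul_x y h, mul_assoc]

theorem rewriteGen_mul_rewriteGen (s : Letter) (t : Tgt) (s' : Letter) (t' : Tgt) {k n : ℕ}
    (h : k < n) :
    rewriteGen s t n * rewriteGen s' t' k = rewriteGen s' t' k * rewriteGen s t (n + 1) := by
  change gen _ n * x n * _ = _ * (gen _ (n + 1) * x (n + 1))
  rw [mul_assoc, gen_mul_rewriteGen none s' t' h, ← mul_assoc, gen_mul_rewriteGen _ s' t' h,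
    mul_assoc]

/-- The image of `X_{x,s→t,u}` in the ambient group. -/
def rewriting (s : Letter) (t : Tgt) (u : Word) : Ambient :=
  twist (fun a => shiftGen (.relabel a)) (rewriteGen s t) [s] (tw t) u

theorem intertwines_rewriting (s : Letter) (t : Tgt) :
    Intertwines rewriting rewriting (rewriting s t) := by
  exact intertwines_twist (c := fun a => shiftGen (.relabel a)) (z := rewriteGen)
    (fun _ _ _ _ _ => gen_mul_rewriteGen _ _ _) (rewriteGen_mul_rewriteGen s t) [s] (tw t)

/-- The images of the generators of `VF` in the ambient group. -/
def ofGen : Gen → Ambient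
  | .fam1 j => shiftGen (.fam1 j) 0
  | .fam2 a s t u => shiftGen (.base a) 0 * rewriting s t u * (shiftGen (.base a) 0)⁻¹
  | .fam3 i u => shiftGen (.base (src i)) 0 *
      twist (fun a => shiftGen (.relabel a)) (shiftGen (.fam3 i)) [] [] u *
        (shiftGen (.base (dst i)) 0)⁻¹

theorem satisfiesVFRels_ofGen : SatisfiesVFRels ofGen := by
  have hbase (a : Letter) : Intertwines (family2 ofGen a) rewriting
      fun _ => shiftGen (.base a) 0 :=
    .const fun s t u => by simp only [family2, ofGen, inv_mul_cancel_right]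
  refine ⟨fun a s t => ((hbase a).mul (intertwines_rewriting s t)).mul (hbase a).inv, fun i => ?_⟩
  have htwist := intertwines_twist (fun a s t _ _ => gen_mul_rewriteGen
    (some (.inr (.relabel a))) s t) (fun s t _ _ => gen_mul_rewriteGen (some (.inr (.fam3 i))) s t)
    [] []
  exact (((hbase _).mul htwist).mul (hbase _).inv).congr fun u hu =>
    (family3_of_ne_nil ofGen i hu).symm

/-- The embedding of `VF` into the ambient group. -/
def ofVF : VF →* Ambient :=
  vfLift satisfiesVFRels_ofGen

end Ambient

end Embedding

section Straighten

variable {K : Type*} [Group K] (E : Letter → Tgt → Word → K)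

/-- The word consisting of `n` letters `x`. -/
def xs (n : ℕ) : Word :=
  List.replicate n .x

/-- The element replacing the first letter of the word `s :: u` by `x`, via `xx`. -/
def relabel (s : Letter) (u : Word) : K :=
  E .x (.x, .x) u * (E s (.x, .x) u)⁻¹

/-- The element replacing all letters of `w` in the word `w ++ u` by `x`. -/
def relabelWord : Word → Word → K
  | [], _ => 1
  | s :: w, u => relabelWord w u * relabel E s (w ++ u)

/-- The elements `B u`, considered as leading from `w ++ u` to `w' ++ u`, after the letters of `w`
and `w'` have been replaced by `x`. -/
def straighten (B : Word → K) (w w' u : Word) : K :=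
  relabelWord E w u * B u * (relabelWord E w' u)⁻¹

theorem relabelWord_append (w w' u : Word) :
    relabelWord E (w ++ w') u = relabelWord E w' u * relabelWord E w (w' ++ u) := by
  induction w with
  | nil => simp [relabelWord]
  | cons s w ih =>
    simp only [List.cons_append, relabelWord, ih, List.append_assoc, mul_assoc]

variable {E} {A B : Word → K}

theorem Intertwines.semiconjBy (hA : Intertwines E E A) (p : Word) (s : Letter) (t : Tgt)
    (u : Word) : SemiconjBy (E s t u) (A (p ++ (tw t ++ u))) (A (p ++ ([s] ++ u))) := by
  rw [SemiconjBy, ← List.append_assoc, ← List.append_assoc, hA]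

theorem semiconjBy_relabel (hA : Intertwines E E A) (p : Word) (s : Letter) (u : Word) :
    SemiconjBy (relabel E s u) (A (p ++ ([s] ++ u))) (A (p ++ ([.x] ++ u))) :=
  (hA.semiconjBy p .x (.x, .x) u).mul_left (hA.semiconjBy p s (.x, .x) u).inv_symm_left

theorem semiconjBy_relabelWord (hA : Intertwines E E A) (p w u : Word) :
    SemiconjBy (relabelWord E w u) (A (p ++ (w ++ u))) (A (p ++ (xs w.length ++ u))) := by
  induction w generalizing p with
  | nil => exact SemiconjBy.one_left _
  | cons s w ih =>
    have hw := ih (p ++ [.x])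
    simp only [List.append_assoc] at hw
    exact hw.mul_left (semiconjBy_relabel hA p s (w ++ u))

theorem semiconjBy_straighten (hA : Intertwines E E A) (p : Word) (s : Letter) (t : Tgt)
    (u : Word) : SemiconjBy (straighten E (E s t) [s] (tw t) u) (A (p ++ (xs 2 ++ u)))
      (A (p ++ (xs 1 ++ u))) :=
  ((semiconjBy_relabelWord hA p [s] u).mul_left (hA.semiconjBy p s t u)).mul_left
    (semiconjBy_relabelWord hA p (tw t) u).inv_symm_left

theorem semiconjBy_of_forall_append {g : K} {k n : ℕ} (hkn : k < n)
    (h : ∀ p, SemiconjBy g (A (p ++ (xs 2 ++ xs k))) (A (p ++ (xs 1 ++ xs k)))) :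
    SemiconjBy g (A (xs (n + 1))) (A (xs n)) := by
  obtain ⟨m, rfl⟩ := Nat.exists_eq_add_of_lt hkn
  have hm := h (xs m)
  simp only [xs, ← List.replicate_add] at hm ⊢
  convert hm using 3 <;> omega

theorem intertwines_relabel (hE : ∀ s t, Intertwines E E (E s t)) (s : Letter) :
    Intertwines E E (relabel E s) :=
  (hE _ _).mul (hE _ _).inv

theorem intertwines_relabelWord (hE : ∀ s t, Intertwines E E (E s t)) (w : Word) :
    Intertwines E E (relabelWord E w) := by
  induction w with
  | nil => exact .of_eq_one fun _ _ => rfl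
  | cons s w ih => exact ih.mul ((intertwines_relabel hE s).append w)

theorem intertwines_straighten (hE : ∀ s t, Intertwines E E (E s t)) (hB : Intertwines E E B)
    (w w' : Word) : Intertwines E E (straighten E B w w') :=
  ((intertwines_relabelWord hE w).mul hB).mul (intertwines_relabelWord hE w').inv

theorem spell_relabel (hE : ∀ s t, Intertwines E E (E s t)) (u : Word) :
    spell (fun s n => relabel E s (xs n)) u = relabelWord E u [] := by
  induction u with
  | nil => rfl
  | cons s u ih =>
    have h := semiconjBy_relabelWord (intertwines_relabel hE s) [] u []
    simp only [List.nil_append, List.append_nil] at h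
    rw [spell, relabelWord, ih, List.append_nil, h.eq]

theorem twist_straighten (hE : ∀ s t, Intertwines E E (E s t)) (hB : Intertwines E E B)
    (w w' u : Word) : twist (fun s n => relabel E s (xs n))
      (fun n => straighten E B w w' (xs n)) w w' u = B u := by
  have h := semiconjBy_relabelWord (intertwines_straighten hE hB w w') [] u []
  simp only [List.nil_append, List.append_nil] at h
  rw [twist, spell_relabel hE, spell_relabel hE, relabelWord_append, relabelWord_append,
    List.append_nil, mul_inv_rev, mul_assoc, ← mul_assoc (straighten E B w w' _), ← h.eq,
    straighten]
  group

end Straighten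

namespace Ambient

open LabelledThompson

variable {K : Type*} [Group K] (F : Gen → K) (T : Letter → K)

/-- The families of elements of `K` whose values at the words `xs n` are to be the images of the
generators of the ambient group. -/
def genFamily : Option ((Letter × Tgt) ⊕ ShiftLabel) → Word → K
  | none => family2 F .x .x (.x, .x)
  | some (.inl (s, t)) => fun u =>
      straighten (family2 F .x) (family2 F .x s t) [s] (tw t) u * (family2 F .x .x (.x, .x) u)⁻¹
  | some (.inr (.relabel s)) => relabel (family2 F .x) s
  | some (.inr (.base a)) => fun u => if u = [] then T a else 1
  | some (.inr (.fam1 j)) => fun u => if u = [] then F (.fam1 j) else 1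
  | some (.inr (.fam3 i)) => fun u => (T (src i))⁻¹ * family3 F i u * T (dst i)

variable {F T} (hF : SatisfiesVFRels F)
  (hT : ∀ a s t u, SemiconjBy (T a) (family2 F .x s t u) (family2 F a s t u))
include hF hT

theorem intertwines_genFamily (y : Option ((Letter × Tgt) ⊕ ShiftLabel)) :
    Intertwines (family2 F .x) (family2 F .x) (genFamily F T y) := by
  have hE := hF.intertwines_family2 .x
  have hbase (a : Letter) : Intertwines (family2 F a) (family2 F .x) fun _ => T a := .const (hT a)
  rcases y with _ | ⟨s, t⟩ | s | a | j | i
  · exact hE _ _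
  · exact (intertwines_straighten hE (hE s t) _ _).mul (hE _ _).inv
  · exact intertwines_relabel hE s
  · exact .of_eq_one fun u hu => if_neg hu
  · exact .of_eq_one fun u hu => if_neg hu
  · exact ((hbase _).inv.mul (hF.intertwines_family3 i)).mul (hbase _)

/-- The homomorphism from the ambient group that extends a homomorphism from `VF` given on
generators by `F`, if there are elements `T a` conjugating the `X_{x,s→t,u}` to the
`X_{a,s→t,u}`. -/
def extend : Ambient →* K :=
  have hnone (y : Option ((Letter × Tgt) ⊕ ShiftLabel)) {k n : ℕ} (h : k < n) :
      SemiconjBy (genFamily F T none (xs k)) (genFamily F T y (xs (n + 1)))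
        (genFamily F T y (xs n)) :=
    semiconjBy_of_forall_append h fun p =>
      (intertwines_genFamily hF hT y).semiconjBy p .x (.x, .x) (xs k)
  lift (fun y n => genFamily F T y (xs n)) (fun y _ _ h => (hnone y h).symm) fun y r _ k h =>
    Commute.symm <| SemiconjBy.mul_left
      (semiconjBy_of_forall_append h fun p =>
        semiconjBy_straighten (intertwines_genFamily hF hT y) p r.1 r.2 (xs k))
      (hnone y h).inv_symm_left

theorem extend_gen (y : Option ((Letter × Tgt) ⊕ ShiftLabel)) (n : ℕ) :
    extend hF hT (gen y n) = genFamily F T y (xs n) :=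
  lift_gen ..

theorem extend_rewriteGen (s : Letter) (t : Tgt) (n : ℕ) : extend hF hT (rewriteGen s t n) =
    straighten (family2 F .x) (family2 F .x s t) [s] (tw t) (xs n) := by
  rw [rewriteGen, map_mul, extend_gen, extend_gen]
  exact inv_mul_cancel_right _ _

theorem extend_rewriting (s : Letter) (t : Tgt) (u : Word) :
    extend hF hT (rewriting s t u) = family2 F .x s t u := by
  simp only [rewriting, map_twist, extend_gen, extend_rewriteGen]
  exact twist_straighten (hF.intertwines_family2 .x) (hF.intertwines_family2 .x s t) _ _ u

theorem extend_twist_fam3 (i : G3) (u : Word) :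
    extend hF hT (twist (fun a => shiftGen (.relabel a)) (shiftGen (.fam3 i)) [] [] u) =
      (T (src i))⁻¹ * family3 F i u * T (dst i) := by
  have h := twist_straighten (hF.intertwines_family2 .x)
    (intertwines_genFamily hF hT (some (.inr (.fam3 i)))) [] [] u
  simp only [straighten, relabelWord, one_mul, inv_one, mul_one] at h
  simp only [map_twist, extend_gen]
  exact h

theorem extend_base (a : Letter) : extend hF hT (shiftGen (.base a) 0) = T a :=
  extend_gen ..

theorem extend_ofGen (g : Gen) : extend hF hT (ofGen g) = F g := by
  rcases g with j | ⟨a, s, t, u⟩ | ⟨i, u, hu⟩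
  · exact extend_gen ..
  · rw [ofGen, map_mul, map_mul, map_inv, extend_base, extend_rewriting, mul_inv_eq_iff_eq_mul]
    exact hT a s t u
  · rw [ofGen, map_mul, map_mul, map_inv, extend_base, extend_base, extend_twist_fam3,
      family3_of_ne_nil F i hu]
    group

end Ambient

theorem Ambient.ofVF_injective : Function.Injective Ambient.ofVF := by
  obtain ⟨K, _, o, T, ho, hT⟩ := exists_injective_forall_semiconjBy
  have hF : SatisfiesVFRels fun g => o (vfGen g) := satisfiesVFRels_vfGen.map o
  have hcomp : (extend hF hT).comp ofVF = o :=
    vf_hom_ext fun g => by rw [MonoidHom.comp_apply, ofVF, vfLift_vfGen, extend_ofGen]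
  refine Function.Injective.of_comp (f := extend hF hT) ?_
  rwa [← MonoidHom.coe_comp, hcomp]

end VirtualThompson

/-- VF is totally orderable (bi-orderable): there is a linear order on VF invariant
under both left and right multiplication. -/
theorem VF_totally_orderable :
    ∃ r : LinearOrder VF, ∀ a b c : VF, r.le a b → r.le (c * a) (c * b) ∧ r.le (a * c) (b * c) := by
  obtain ⟨P, hP⟩ :=
    VirtualThompson.LabelledThompson.exists_isBiCone (Letter × Tgt) VirtualThompson.ShiftLabel
  exact (hP.preimage VirtualThompson.Ambient.ofVF_injective).exists_linearOrder
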